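/- arXiv:math/0512053 — 8 statements merged into one kernel-verified Lean document; each statement's English description precedes it below -/
import Mathlib

section
/- There exists a function g : ℝ → ℝ which is real-analytic, odd, 2π-periodic with minimal period 2π, not identically zero, and satisfies for all t the equation g''(t) + A(g)·(3⟨g²⟩ g(t) + g(t)³) = 0, where A(g) := ⟨g⁴⟩ + 3⟨g²⟩². Moreover g is non-degenerate in the space of odd 2π-periodic functions: every C², odd, 2π-periodic function h : ℝ → ℝ satisfying for all t the linearized equation h''(t) + 3A(g)(⟨g²⟩ + g(t)²) h(t) + 6 A(g) g(t) ⟨g h⟩ + 4(⟨g³ h⟩ + 3⟨g²⟩⟨g h⟩)(3⟨g²⟩ g(t) + g(t)³) = 0 is identically zero. -/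
open Real

/-- Average of a function over one period `[0, 2π]`. -/
noncomputable def avg (f : ℝ → ℝ) : ℝ := (1 / (2 * π)) * ∫ t in (0:ℝ)..(2 * π), f t

/-- A function with derivative identically zero agrees with its value at `0`. -/
theorem eq_apply_zero_of_hasDerivAt_zero {f : ℝ → ℝ} (hf : ∀ t, HasDerivAt f 0 t) (t : ℝ) :
    f t = f 0 :=
  is_const_of_deriv_eq_zero (fun x => (hf x).differentiableAt) (fun x => (hf x).deriv) t 0

theorem hasDerivAt_primitive {f : ℝ → ℝ} (hf : Continuous f) (t : ℝ) :
    HasDerivAt (fun t => ∫ x in (0:ℝ)..t, f x) (f t) t :=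
  intervalIntegral.integral_hasDerivAt_right (hf.intervalIntegrable _ _)
    hf.stronglyMeasurable.stronglyMeasurableAtFilter hf.continuousAt

theorem integral_eq_avg (f : ℝ → ℝ) : ∫ t in (0:ℝ)..(2 * π), f t = 2 * π * avg f := by
  have := pi_pos
  unfold avg
  field_simp

/-- Non-degeneracy of the nonlocal Duffing equation `y'' + 3⟨y²⟩y + y³ = 0` among functions
vanishing at the ends of the period. -/
theorem eq_zero_of_linearized_duffing {y y₁ h h₁ : ℝ → ℝ} {b e s : ℝ}
    (hy : ∀ t, HasDerivAt y (y₁ t) t)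
    (hy₁ : ∀ t, HasDerivAt y₁ (-(3 * b * y t + y t ^ 3)) t)
    (energy : ∀ t, y₁ t ^ 2 = e - 3 * b * y t ^ 2 - y t ^ 4 / 2)
    (y_zero : y 0 = 0) (y_two_pi : y (2 * π) = 0) (y₁_two_pi : y₁ (2 * π) = y₁ 0)
    (hb : avg (fun t => y t ^ 2) = b) (e_pos : 0 < e)
    (hh : ∀ t, HasDerivAt h (h₁ t) t)
    (hh₁ : ∀ t, HasDerivAt h₁ (-(3 * (b + y t ^ 2) * h t + 6 * y t * s)) t)
    (hs : avg (fun t => y t * h t) = s)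
    (h_zero : h 0 = 0) (h_two_pi : h (2 * π) = 0) (h₁_two_pi : h₁ (2 * π) = h₁ 0) (t : ℝ) :
    h t = 0 := by
  have hpi := pi_pos
  have y_cont : Continuous y := continuous_iff_continuousAt.2 fun t => (hy t).continuousAt
  have h_cont : Continuous h := continuous_iff_continuousAt.2 fun t => (hh t).continuousAt
  obtain ⟨Y, hY_def⟩ : ∃ Y : ℝ → ℝ, Y = fun t => ∫ x in (0:ℝ)..t, y x ^ 2 := ⟨_, rfl⟩
  obtain ⟨Z, hZ_def⟩ : ∃ Z : ℝ → ℝ, Z = fun t => ∫ x in (0:ℝ)..t, y x ^ 4 := ⟨_, rfl⟩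
  have hY : ∀ t, HasDerivAt Y (y t ^ 2) t := fun t => by
    rw [hY_def]; exact hasDerivAt_primitive (y_cont.pow 2) t
  have hZ : ∀ t, HasDerivAt Z (y t ^ 4) t := fun t => by
    rw [hZ_def]; exact hasDerivAt_primitive (y_cont.pow 4) t
  have Y_zero : Y 0 = 0 := by simp [hY_def]
  have Z_zero : Z 0 = 0 := by simp [hZ_def]
  have Y_two_pi : Y (2 * π) = 2 * π * b := by
    rw [← hb, ← integral_eq_avg, hY_def]
  have Z_nonneg : 0 ≤ Z (2 * π) := by
    rw [hZ_def]
    exact intervalIntegral.integral_nonneg (by positivity) fun _ _ => by positivity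
  have hyh : ∫ t in (0:ℝ)..(2 * π), y t * h t = 2 * π * s := by rw [integral_eq_avg, hs]
  have wronskian : ∀ t, h₁ t * y₁ t + h t * (3 * b * y t + y t ^ 3) + 3 * s * y t ^ 2
      = h₁ 0 * y₁ 0 := by
    intro t
    have key := eq_apply_zero_of_hasDerivAt_zero (f := fun t =>
      h₁ t * y₁ t + h t * (3 * b * y t + y t ^ 3) + 3 * s * y t ^ 2) (fun t => by
        refine (((hh₁ t).mul (hy₁ t)).add ((hh t).mul (((hy t).const_mul (3 * b)).add
          ((hy t).pow 3))) |>.add (((hy t).pow 2).const_mul (3 * s))).congr_deriv ?_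
        simp only [Pi.add_apply, Pi.pow_apply]
        push_cast
        ring) t
    simpa [y_zero, h_zero] using key
  set u : ℝ → ℝ := fun t => y t + t * y₁ t with hu_def
  set u₁ : ℝ → ℝ := fun t => 2 * y₁ t - t * (3 * b * y t + y t ^ 3) with hu₁_def
  set v : ℝ → ℝ := fun t => y t ^ 3 + 6 * b * y t - y₁ t * Y t with hv_def
  set v₁ : ℝ → ℝ := fun t => 2 * y t ^ 2 * y₁ t + 6 * b * y₁ t + (3 * b * y t + y t ^ 3) * Y t
    with hv₁_def
  have hu : ∀ t, HasDerivAt u (u₁ t) t := fun t => by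
    refine ((hy t).add ((hasDerivAt_id t).mul (hy₁ t))).congr_deriv ?_
    simp only [hu₁_def, id]
    ring
  have hu₁ : ∀ t, HasDerivAt u₁ (-(3 * (b + y t ^ 2) * u t) - 6 * b * y t) t := fun t => by
    refine (((hy₁ t).const_mul 2).sub ((hasDerivAt_id t).mul (((hy t).const_mul (3 * b)).add
      ((hy t).pow 3)))).congr_deriv ?_
    simp only [hu_def, id, Pi.add_apply, Pi.pow_apply]
    push_cast
    ring
  have hv : ∀ t, HasDerivAt v (v₁ t) t := fun t => by
    refine ((((hy t).pow 3).add ((hy t).const_mul (6 * b))).sub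
      ((hy₁ t).mul (hY t))).congr_deriv ?_
    simp only [hv₁_def]
    push_cast
    ring
  have hv₁ : ∀ t, HasDerivAt v₁ (-(3 * (b + y t ^ 2) * v t) + 4 * e * y t) t := fun t => by
    refine ((((((hy t).pow 2).const_mul 2).mul (hy₁ t)).add ((hy₁ t).const_mul (6 * b))).add
      ((((hy t).const_mul (3 * b)).add ((hy t).pow 3)).mul (hY t))).congr_deriv ?_
    simp only [hv_def, Pi.add_apply, Pi.pow_apply]
    push_cast
    linear_combination (4 * y t) * energy t
  have relation_u : h₁ 0 * y₁ 0 = 3 * b * s := by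
    have key := intervalIntegral.integral_eq_sub_of_hasDerivAt (a := 0) (b := 2 * π)
      (f := fun t => h₁ t * u t - h t * u₁ t + 3 * s * (t * y t ^ 2) + 3 * s * Y t)
      (f' := fun t => 6 * b * (y t * h t)) (fun t _ => by
        refine (((((hh₁ t).mul (hu t)).sub ((hh t).mul (hu₁ t))).add
          (((hasDerivAt_id t).mul ((hy t).pow 2)).const_mul (3 * s))).add
          ((hY t).const_mul (3 * s))).congr_deriv ?_
        simp only [hu_def, id, Pi.pow_apply]
        push_cast
        ring)
      ((continuous_const.mul (y_cont.mul h_cont)).intervalIntegrable _ _)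
    rw [intervalIntegral.integral_const_mul, hyh] at key
    simp only [hu_def, y_zero, h_zero, y_two_pi, h_two_pi, h₁_two_pi, y₁_two_pi, Y_zero,
      Y_two_pi] at key
    have : 2 * π * (h₁ 0 * y₁ 0 - 3 * b * s) = 0 := by linear_combination -key
    linarith [(mul_eq_zero.1 this).resolve_left (by positivity)]
  have relation_v : s * (9 * Z (2 * π) + 66 * π * b ^ 2 + 8 * π * e) = 0 := by
    have key := intervalIntegral.integral_eq_sub_of_hasDerivAt (a := 0) (b := 2 * π)
      (f := fun t => h₁ t * v t - h t * v₁ t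
        + 6 * s * (3 / 2 * Z t + 6 * b * Y t - 1 / 2 * (y t ^ 2 * Y t)))
      (f' := fun t => (-4 * e) * (y t * h t)) (fun t _ => by
        refine ((((hh₁ t).mul (hv t)).sub ((hh t).mul (hv₁ t))).add
          ((((hZ t).const_mul (3 / 2)).add ((hY t).const_mul (6 * b))).sub
            ((((hy t).pow 2).mul (hY t)).const_mul (1 / 2)) |>.const_mul (6 * s))).congr_deriv ?_
        simp only [hv_def, Pi.pow_apply]
        push_cast
        ring)
      ((continuous_const.mul (y_cont.mul h_cont)).intervalIntegrable _ _)
    rw [intervalIntegral.integral_const_mul, hyh] at key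
    simp only [hv_def, y_zero, h_zero, y_two_pi, h_two_pi, h₁_two_pi, y₁_two_pi, Y_zero,
      Y_two_pi, Z_zero] at key
    linear_combination -key + 2 * π * b * relation_u
  have s_zero : s = 0 := by
    refine (mul_eq_zero.1 relation_v).resolve_right ?_
    positivity
  subst s_zero
  set x : ℝ → ℝ := fun t => 2 * e * u t + 3 * b * v t with hx_def
  set x₁ : ℝ → ℝ := fun t => 2 * e * u₁ t + 3 * b * v₁ t with hx₁_def
  have wronskian_x : h₁ t * x t - h t * x₁ t = 0 := by
    have key := eq_apply_zero_of_hasDerivAt_zero (f := fun t => h₁ t * x t - h t * x₁ t)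
      (fun t => by
        refine (((hh₁ t).mul (((hu t).const_mul (2 * e)).add ((hv t).const_mul (3 * b)))).sub
          ((hh t).mul (((hu₁ t).const_mul (2 * e)).add
            ((hv₁ t).const_mul (3 * b))))).congr_deriv ?_
        simp only [Pi.add_apply]
        ring) t
    simpa [hx_def, hu_def, hv_def, y_zero, h_zero, Y_zero] using key
  have wronskian_y : h₁ t * y₁ t + h t * (3 * b * y t + y t ^ 3) = 0 := by
    have := wronskian t
    rw [relation_u] at this
    linarith
  have det : x₁ t * y₁ t + x t * (3 * b * y t + y t ^ 3) = 4 * e ^ 2 + 18 * b ^ 2 * e := by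
    simp only [hx_def, hx₁_def, hu_def, hu₁_def, hv_def, hv₁_def]
    linear_combination (4 * e + 3 * b * (2 * y t ^ 2 + 6 * b)) * energy t
  have : h t * (4 * e ^ 2 + 18 * b ^ 2 * e) = 0 := by
    rw [← det]
    linear_combination x t * wronskian_y - y₁ t * wronskian_x
  refine (mul_eq_zero.1 this).resolve_right ?_
  positivity

/-- A real primitive of the restriction to `ℝ` of a holomorphic function is real-analytic. -/
theorem analyticAt_of_hasDerivAt_of_complex {F f : ℝ → ℝ} {W : ℂ → ℂ} {x : ℝ}
    (hF : ∀ t, HasDerivAt F (f t) t) (hW : AnalyticAt ℂ W x) (hWf : ∀ t : ℝ, W t = f t) :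
    AnalyticAt ℝ F x := by
  obtain ⟨r, r_pos, hr⟩ := Metric.eventually_nhds_iff_ball.1 hW.eventually_analyticAt
  obtain ⟨Φ, hΦ⟩ := DifferentiableOn.isExactOn_ball (f := W) (c := (x : ℂ)) (r := r)
    fun z hz => (hr z hz).differentiableAt.differentiableWithinAt
  have mem_ball : ∀ t ∈ Metric.ball x r, (t : ℂ) ∈ Metric.ball (x : ℂ) r := fun t ht => by
    simpa [Metric.mem_ball, Complex.dist_eq, ← Complex.ofReal_sub, Real.dist_eq] using ht
  have hΦ_re : ∀ t ∈ Metric.ball x r, HasDerivAt (fun t : ℝ => (Φ t).re) (f t) t := fun t ht => by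
    have := (hΦ t (mem_ball t ht)).real_of_complex
    rwa [hWf, Complex.ofReal_re] at this
  have Φ_analytic : AnalyticAt ℂ Φ x :=
    DifferentiableOn.analyticAt (s := Metric.ball (x : ℂ) r)
      (fun z hz => (hΦ z hz).differentiableAt.differentiableWithinAt)
      (Metric.ball_mem_nhds _ r_pos)
  have re_analytic : AnalyticAt ℝ (fun t : ℝ => (Φ t).re) x :=
    Φ_analytic.re_ofReal
  refine (re_analytic.add (analyticAt_const (v := F x - (Φ x).re))).congr ?_
  filter_upwards [Metric.ball_mem_nhds x r_pos] with t ht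
  have const := (convex_ball x r).is_const_of_fderivWithin_eq_zero (𝕜 := ℝ)
    (f := fun t => F t - (Φ t).re)
    (fun t ht => ((hF t).sub (hΦ_re t ht)).differentiableAt.differentiableWithinAt)
    (fun t ht => by
      rw [fderivWithin_of_isOpen Metric.isOpen_ball ht]
      refine ((hF t).sub (hΦ_re t ht)).hasFDerivAt.fderiv.trans ?_
      simp) ht (Metric.mem_ball_self r_pos)
  simp only [Pi.add_apply] at const ⊢
  linarith

/-- For a positive even `2π`-periodic weight of average one, the flow of `φ' = 1 / w(φ)` from `0`
is an odd increasing bijection of the line commuting with the translation by `2π`. -/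
theorem exists_phase {w : ℝ → ℝ} {W : ℂ → ℂ} (w_cont : Continuous w) (w_pos : ∀ x, 0 < w x)
    (w_periodic : Function.Periodic w (2 * π)) (w_even : ∀ x, w (-x) = w x) (w_avg : avg w = 1)
    (hW : ∀ x : ℝ, AnalyticAt ℂ W x) (hWw : ∀ x : ℝ, W x = w x) :
    ∃ φ : ℝ → ℝ, (∀ t, AnalyticAt ℝ φ t) ∧ (∀ t, HasDerivAt φ (w (φ t))⁻¹ t) ∧ StrictMono φ ∧
      Function.Surjective φ ∧ (∀ t, φ (-t) = -φ t) ∧ ∀ t, φ (t + 2 * π) = φ t + 2 * π := by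
  obtain ⟨G, hG_def⟩ : ∃ G : ℝ → ℝ, G = fun t => ∫ x in (0:ℝ)..t, w x := ⟨_, rfl⟩
  have hG : ∀ t, HasDerivAt G (w t) t := fun t => by
    rw [hG_def]; exact hasDerivAt_primitive w_cont t
  have G_cont : Continuous G := continuous_iff_continuousAt.2 fun t => (hG t).continuousAt
  have G_mono : StrictMono G := strictMono_of_deriv_pos fun t => (hG t).deriv ▸ w_pos t
  have G_analytic : ∀ t, AnalyticAt ℝ G t := fun t =>
    analyticAt_of_hasDerivAt_of_complex hG (hW t) hWw
  have G_neg : ∀ t, G (-t) = -G t := fun t => by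
    have := intervalIntegral.integral_comp_neg (f := w) (a := 0) (b := t)
    simp only [w_even, neg_zero] at this
    simp only [hG_def]
    rw [this, intervalIntegral.integral_symm]
  have G_add : ∀ t, G (t + 2 * π) = G t + 2 * π := fun t => by
    simp only [hG_def]
    rw [← intervalIntegral.integral_add_adjacent_intervals (b := t)
      (w_cont.intervalIntegrable _ _) (w_cont.intervalIntegrable _ _),
      w_periodic.intervalIntegral_add_eq t 0, zero_add, integral_eq_avg, w_avg, mul_one]
  have G_nat : ∀ n : ℕ, G (n * (2 * π)) = n * (2 * π) := fun n => by
    induction n with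
    | zero => simp [hG_def]
    | succ n ih =>
      push_cast
      rw [add_mul, one_mul, G_add, ih]
  have G_surj : Function.Surjective G := fun t => by
    obtain ⟨n, hn⟩ := exists_nat_ge |t|
    have hn' : |t| ≤ n * (2 * π) := hn.trans (le_mul_of_one_le_right n.cast_nonneg
      (by linarith [pi_gt_three]))
    obtain ⟨h₁, h₂⟩ := abs_le.1 hn'
    refine mem_range_of_exists_le_of_exists_ge G_cont ⟨-(n * (2 * π)), ?_⟩ ⟨n * (2 * π), ?_⟩
    · rwa [G_neg, G_nat]
    · rwa [G_nat]
  set iso := G_mono.orderIsoOfSurjective G G_surj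
  have left_inv : ∀ x, iso.symm (G x) = x := fun x => iso.symm_apply_apply x
  have right_inv : ∀ t, G (iso.symm t) = t := fun t => iso.apply_symm_apply t
  refine ⟨iso.symm, fun t => ?_, fun t => ?_, iso.symm.strictMono, iso.symm.surjective,
    fun t => ?_, fun t => ?_⟩
  · obtain ⟨x, rfl⟩ := G_surj t
    refine (analyticAt_comp_iff_of_deriv_ne_zero (G_analytic x)
      ((hG x).deriv ▸ (w_pos x).ne')).1 (analyticAt_id.congr ?_)
    exact .of_forall fun x => (left_inv x).symm
  · exact HasDerivAt.of_local_left_inverse iso.symm.continuous.continuousAt (hG _)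
      (w_pos _).ne' (.of_forall right_inv)
  · apply G_mono.injective
    rw [G_neg, right_inv, right_inv]
  · apply G_mono.injective
    rw [G_add, right_inv, right_inv]

/-- The weight `(1 + k² sin² θ)^(-1/2)` of the incomplete elliptic integral of the first kind with
parameter `m = -k²`. -/
noncomputable def ellipticWeight (k θ : ℝ) : ℝ := (√(1 + k ^ 2 * sin θ ^ 2))⁻¹

theorem ellipticWeight_pos (k θ : ℝ) : 0 < ellipticWeight k θ := by
  unfold ellipticWeight; positivity

theorem continuous_ellipticWeight_uncurry :
    Continuous fun p : ℝ × ℝ => ellipticWeight p.1 p.2 := by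
  unfold ellipticWeight
  refine Continuous.inv₀ (by fun_prop) fun p => ?_
  positivity

theorem continuous_ellipticWeight (k : ℝ) : Continuous (ellipticWeight k) :=
  continuous_ellipticWeight_uncurry.comp (Continuous.prodMk_right k)

theorem exists_elliptic_modulus : ∃ k : ℝ, k ≠ 0 ∧
    6 * k ^ 2 * ∫ θ in (0:ℝ)..(2 * π), sin θ ^ 2 * ellipticWeight k θ
      = (1 - k ^ 2) * ∫ θ in (0:ℝ)..(2 * π), ellipticWeight k θ := by
  have hpi := pi_pos
  set F : ℝ → ℝ := fun k => (1 - k ^ 2) * (∫ θ in (0:ℝ)..(2 * π), ellipticWeight k θ)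
    - 6 * k ^ 2 * ∫ θ in (0:ℝ)..(2 * π), sin θ ^ 2 * ellipticWeight k θ with hF
  have cont_weight : Continuous fun k => ∫ θ in (0:ℝ)..(2 * π), ellipticWeight k θ :=
    intervalIntegral.continuous_parametric_intervalIntegral_of_continuous'
      continuous_ellipticWeight_uncurry _ _
  have cont_sin_weight :
      Continuous fun k => ∫ θ in (0:ℝ)..(2 * π), sin θ ^ 2 * ellipticWeight k θ :=
    intervalIntegral.continuous_parametric_intervalIntegral_of_continuous'
      (((continuous_sin.comp continuous_snd).pow 2).mul continuous_ellipticWeight_uncurry) _ _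
  have F_cont : Continuous F := by fun_prop
  have F_zero : 0 < F 0 := by simp [hF, ellipticWeight]; positivity
  have F_one : F 1 ≤ 0 := by
    have : 0 ≤ ∫ θ in (0:ℝ)..(2 * π), sin θ ^ 2 * ellipticWeight 1 θ :=
      intervalIntegral.integral_nonneg (by positivity) fun θ _ =>
        mul_nonneg (sq_nonneg _) (ellipticWeight_pos 1 θ).le
    simp only [hF]
    linarith
  obtain ⟨k, -, hk⟩ := intermediate_value_Icc' zero_le_one F_cont.continuousOn ⟨F_one, F_zero.le⟩
  refine ⟨k, ?_, ?_⟩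
  · rintro rfl
    exact F_zero.ne' hk
  · simp only [hF] at hk
    linarith

theorem exists_holomorphic_ellipticWeight (k : ℝ) :
    ∃ W : ℂ → ℂ, (∀ x : ℝ, AnalyticAt ℂ W x) ∧ ∀ x : ℝ, W x = ellipticWeight k x := by
  have base : ∀ x : ℝ, 1 + (k : ℂ) ^ 2 * Complex.sin x ^ 2 = ((1 + k ^ 2 * sin x ^ 2 : ℝ) : ℂ) :=
    fun x => by push_cast; rfl
  refine ⟨fun z => ((1 + (k : ℂ) ^ 2 * Complex.sin z ^ 2) ^ ((1 / 2 : ℝ) : ℂ))⁻¹,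
    fun x => ?_, fun x => ?_⟩
  · have base_analytic : AnalyticAt ℂ (fun z => 1 + (k : ℂ) ^ 2 * Complex.sin z ^ 2) x :=
      analyticAt_const.add (analyticAt_const.mul
        ((Complex.differentiable_sin.analyticAt x).pow 2))
    refine (base_analytic.cpow analyticAt_const ?_).inv ?_
    · rw [base, Complex.ofReal_mem_slitPlane]
      positivity
    · rw [base, ← Complex.ofReal_cpow (by positivity), Complex.ofReal_ne_zero]
      positivity
  · simp only [base]
    rw [← Complex.ofReal_cpow (by positivity), ← Real.sqrt_eq_rpow, ← Complex.ofReal_inv]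
    rfl

/-- The odd `2π`-periodic solution of the nonlocal Duffing equation `y'' + 3⟨y²⟩y + y³ = 0`,
with its first derivative `y₁` and its energy integral. -/
theorem exists_duffing_solution : ∃ (y y₁ : ℝ → ℝ) (b e : ℝ),
    (∀ t, AnalyticAt ℝ y t) ∧ (∀ t, y (-t) = -y t) ∧ Function.Periodic y (2 * π) ∧
    (∀ p : ℝ, 0 < p → Function.Periodic y p → 2 * π ≤ p) ∧
    (∀ t, HasDerivAt y (y₁ t) t) ∧ (∀ t, HasDerivAt y₁ (-(3 * b * y t + y t ^ 3)) t) ∧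
    (∀ t, y₁ t ^ 2 = e - 3 * b * y t ^ 2 - y t ^ 4 / 2) ∧
    avg (fun t => y t ^ 2) = b ∧ 0 < e := by
  have hpi := pi_pos
  obtain ⟨k, k_ne, hk⟩ := exists_elliptic_modulus
  obtain ⟨W, W_analytic, hW⟩ := exists_holomorphic_ellipticWeight k
  obtain ⟨Ω, hΩ⟩ : ∃ Ω, Ω = avg (ellipticWeight k) := ⟨_, rfl⟩
  have integral_weight : ∫ θ in (0:ℝ)..(2 * π), ellipticWeight k θ = 2 * π * Ω := by
    rw [integral_eq_avg, hΩ]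
  have Ω_pos : 0 < Ω := by
    have : 0 < 2 * π * Ω := integral_weight ▸ intervalIntegral.intervalIntegral_pos_of_pos
      ((continuous_ellipticWeight k).intervalIntegrable _ _) (ellipticWeight_pos k)
      (by positivity)
    exact pos_of_mul_pos_right this (by positivity)
  obtain ⟨φ, φ_analytic, hφ, φ_mono, φ_surj, φ_neg, φ_add⟩ :=
    exists_phase (w := fun θ => ellipticWeight k θ / Ω) (W := fun z => W z / Ω)
      ((continuous_ellipticWeight k).div_const Ω)
      (fun θ => div_pos (ellipticWeight_pos k θ) Ω_pos)
      (fun θ => by simp [ellipticWeight]) (fun θ => by simp [ellipticWeight])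
      (by
        have : avg (fun θ => ellipticWeight k θ / Ω) = avg (ellipticWeight k) / Ω := by
          simp [avg, intervalIntegral.integral_div, mul_div_assoc]
        rw [this, ← hΩ, div_self Ω_pos.ne'])
      (fun x => (W_analytic x).div analyticAt_const (by exact_mod_cast Ω_pos.ne'))
      (fun x => by rw [hW]; push_cast; rfl)
  set r : ℝ → ℝ := fun t => √(1 + k ^ 2 * sin (φ t) ^ 2) with hr_def
  have r_pos : ∀ t, 0 < r t := fun t => by simp only [hr_def]; positivity
  have r_sq : ∀ t, r t ^ 2 = 1 + k ^ 2 * sin (φ t) ^ 2 := fun t => sq_sqrt (by positivity)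
  replace hφ : ∀ t, HasDerivAt φ (Ω * r t) t := fun t => by
    convert hφ t using 1
    simp [ellipticWeight, hr_def]
  have φ_zero : φ 0 = 0 := by
    have := φ_neg 0
    rw [neg_zero] at this
    linarith
  have φ_cont : Continuous φ := continuous_iff_continuousAt.2 fun t => (hφ t).continuousAt
  have r_cont : Continuous r := by fun_prop
  have hr : ∀ t, HasDerivAt r (Ω * k ^ 2 * sin (φ t) * cos (φ t)) t := fun t => by
    refine (((((hφ t).sin).pow 2).const_mul (k ^ 2)).const_add 1 |>.sqrt ?_).congr_deriv ?_
    · change 1 + k ^ 2 * sin (φ t) ^ 2 ≠ 0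
      positivity
    · have := (r_pos t).ne'
      change _ / (2 * r t) = _
      field_simp
      push_cast
      ring
  set V : ℝ := √2 * k * Ω with hV_def
  have V_sq : V ^ 2 = 2 * k ^ 2 * Ω ^ 2 := by
    rw [hV_def, mul_pow, mul_pow, sq_sqrt (by norm_num)]
  have V_ne : V ≠ 0 := by positivity
  refine ⟨fun t => V * sin (φ t), fun t => V * Ω * (cos (φ t) * r t), Ω ^ 2 * (1 - k ^ 2) / 3,
    V ^ 2 * Ω ^ 2, fun t => ?_, fun t => ?_, fun t => ?_, fun p p_pos hp => ?_, fun t => ?_,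
    fun t => ?_, fun t => ?_, ?_, by positivity⟩
  · exact analyticAt_const.mul (analyticAt_sin.comp (φ_analytic t))
  · simp [φ_neg]
  · simp [φ_add]
  · by_contra! p_lt
    obtain ⟨t, ht⟩ := φ_surj (π / 2)
    have sin_eq : sin (φ (t + p)) = 1 := by
      have := mul_left_cancel₀ V_ne (hp t)
      rwa [ht, sin_pi_div_two] at this
    obtain ⟨n, hn⟩ := sin_eq_one_iff.1 sin_eq
    have lower : φ t < φ (t + p) := φ_mono (by linarith)
    have upper : φ (t + p) < φ t + 2 * π := φ_add t ▸ φ_mono (by linarith)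
    rw [← hn, ht] at lower upper
    have n_pos : (0 : ℝ) < n := by
      by_contra! hn'
      nlinarith
    have n_lt : (n : ℝ) < 1 := by
      by_contra! hn'
      nlinarith
    have : 0 < n := by exact_mod_cast n_pos
    have : n < 1 := by exact_mod_cast n_lt
    omega
  · refine ((hφ t).sin.const_mul V).congr_deriv ?_
    ring
  · refine (((hφ t).cos.mul (hr t)).const_mul (V * Ω)).congr_deriv ?_
    have := sin_sq_add_cos_sq (φ t)
    linear_combination (-V * Ω ^ 2 * sin (φ t)) * r_sq t
      + V * Ω ^ 2 * k ^ 2 * sin (φ t) * this + V * sin (φ t) ^ 3 * V_sq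
  · have := sin_sq_add_cos_sq (φ t)
    linear_combination V ^ 2 * Ω ^ 2 * cos (φ t) ^ 2 * r_sq t
      + V ^ 2 * Ω ^ 2 * (1 + k ^ 2 * sin (φ t) ^ 2) * this
      + V ^ 2 * sin (φ t) ^ 4 / 2 * V_sq
  · have subst := intervalIntegral.integral_comp_mul_deriv (a := 0) (b := 2 * π)
      (g := fun θ => sin θ ^ 2 * ellipticWeight k θ) (fun t _ => hφ t)
      (by fun_prop) ((continuous_sin.pow 2).mul (continuous_ellipticWeight k))
    have φ_two_pi : φ (2 * π) = 2 * π := by simpa [φ_zero] using φ_add 0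
    have integrand : ∀ t, ((fun θ => sin θ ^ 2 * ellipticWeight k θ) ∘ φ) t * (Ω * r t)
        = Ω * sin (φ t) ^ 2 := fun t => by
      have := (r_pos t).ne'
      change sin (φ t) ^ 2 * (r t)⁻¹ * (Ω * r t) = _
      field_simp
    simp only [integrand, φ_zero, φ_two_pi, intervalIntegral.integral_const_mul] at subst
    rw [← subst, integral_weight] at hk
    simp only [avg, mul_pow, intervalIntegral.integral_const_mul, V_sq]
    field_simp
    refine mul_left_cancel₀ (mul_ne_zero two_ne_zero Ω_pos.ne') ?_
    linear_combination hk

theorem avg_const_mul (c : ℝ) (f : ℝ → ℝ) : avg (fun t => c * f t) = c * avg f := by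
  simp only [avg, intervalIntegral.integral_const_mul]
  ring

theorem avg_add {f g : ℝ → ℝ} (hf : Continuous f) (hg : Continuous g) :
    avg (fun t => f t + g t) = avg f + avg g := by
  simp only [avg]
  rw [intervalIntegral.integral_add (hf.intervalIntegrable _ _) (hg.intervalIntegrable _ _)]
  ring

theorem avg_pos_of_continuous_periodic {f : ℝ → ℝ} (f_cont : Continuous f)
    (f_nonneg : ∀ t, 0 ≤ f t) (f_periodic : Function.Periodic f (2 * π)) {t : ℝ} (ht : f t ≠ 0) :
    0 < avg f := by
  have hpi := pi_pos
  obtain ⟨c, hc, hfc⟩ := f_periodic.exists_mem_Ico₀ two_pi_pos t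
  refine mul_pos (by positivity) (intervalIntegral.integral_pos two_pi_pos f_cont.continuousOn
    (fun x _ => f_nonneg x) ⟨c, Set.Ico_subset_Icc_self hc, ?_⟩)
  rw [← hfc]
  exact (f_nonneg t).lt_of_ne' ht

theorem stmt_0 :
    ∃ g : ℝ → ℝ,
      (∀ t : ℝ, AnalyticAt ℝ g t) ∧
      (∀ t : ℝ, g (-t) = -g t) ∧
      Function.Periodic g (2 * π) ∧
      (∀ p : ℝ, 0 < p → Function.Periodic g p → 2 * π ≤ p) ∧
      g ≠ 0 ∧
      (∀ t : ℝ, deriv (deriv g) t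
          + (avg (fun s => g s ^ 4) + 3 * avg (fun s => g s ^ 2) ^ 2)
            * (3 * avg (fun s => g s ^ 2) * g t + g t ^ 3) = 0) ∧
      (∀ h : ℝ → ℝ, ContDiff ℝ 2 h → (∀ t : ℝ, h (-t) = -h t) →
        Function.Periodic h (2 * π) →
        (∀ t : ℝ, deriv (deriv h) t
            + 3 * (avg (fun s => g s ^ 4) + 3 * avg (fun s => g s ^ 2) ^ 2)
              * (avg (fun s => g s ^ 2) + g t ^ 2) * h t
            + 6 * (avg (fun s => g s ^ 4) + 3 * avg (fun s => g s ^ 2) ^ 2)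
              * g t * avg (fun s => g s * h s)
            + 4 * (avg (fun s => g s ^ 3 * h s)
                + 3 * avg (fun s => g s ^ 2) * avg (fun s => g s * h s))
              * (3 * avg (fun s => g s ^ 2) * g t + g t ^ 3) = 0) →
        h = 0) := by
  obtain ⟨y, y₁, b, e, y_analytic, y_odd, y_periodic, y_minimal, hy, hy₁, energy, hb, e_pos⟩ :=
    exists_duffing_solution
  have y_cont : Continuous y := continuous_iff_continuousAt.2 fun t => (hy t).continuousAt
  have deriv_y : deriv y = y₁ := funext fun t => (hy t).deriv
  obtain ⟨t₀, ht₀⟩ : ∃ t, y t ≠ 0 := by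
    by_contra! y_eq
    have y₁_eq : y₁ 0 = 0 := by
      rw [← deriv_y, show y = fun _ => 0 from funext y_eq, deriv_const]
    have := energy 0
    rw [y₁_eq, y_eq] at this
    norm_num at this
    exact e_pos.ne this
  obtain ⟨a, ha⟩ : ∃ a, a = avg (fun t => y t ^ 4) := ⟨_, rfl⟩
  have a_pos : 0 < a := ha ▸ avg_pos_of_continuous_periodic (y_cont.pow 4)
    (fun t => by positivity) (fun t => by simp only [y_periodic t]) (pow_ne_zero 4 ht₀)
  obtain ⟨c, c_pos, hc⟩ : ∃ c : ℝ, 0 < c ∧ c ^ 6 * (a + 3 * b ^ 2) = 1 := by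
    have A_pos : 0 < a + 3 * b ^ 2 := by positivity
    refine ⟨(a + 3 * b ^ 2)⁻¹ ^ ((6 : ℕ) : ℝ)⁻¹, by positivity, ?_⟩
    rw [Real.rpow_inv_natCast_pow (by positivity) (by norm_num), inv_mul_cancel₀ A_pos.ne']
  have avg_sq : avg (fun t => (c * y t) ^ 2) = c ^ 2 * b := by
    simp only [mul_pow, avg_const_mul, hb]
  have avg_four : avg (fun t => (c * y t) ^ 4) = c ^ 4 * a := by
    simp only [mul_pow, avg_const_mul, ha]
  refine ⟨fun t => c * y t, fun t => analyticAt_const.mul (y_analytic t), fun t => ?_,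
    fun t => ?_, fun p p_pos hp => ?_, fun h_zero => ?_, fun t => ?_, fun h h_smooth h_odd
    h_periodic h_eq => ?_⟩
  · simp only [y_odd, mul_neg]
  · simp only [y_periodic t]
  · exact y_minimal p p_pos fun t => mul_left_cancel₀ c_pos.ne' (hp t)
  · exact ht₀ ((mul_eq_zero.1 (congrFun h_zero t₀)).resolve_left c_pos.ne')
  · have deriv_g : deriv (fun t => c * y t) = fun t => c * y₁ t :=
      funext fun t => ((hy t).const_mul c).deriv
    rw [deriv_g, ((hy₁ t).const_mul c).deriv, avg_sq, avg_four]
    linear_combination (c * (3 * b * y t + y t ^ 3)) * hc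
  · have h_cont : Continuous h := h_smooth.continuous
    have hh : ∀ t, HasDerivAt h (deriv h t) t := fun t =>
      (h_smooth.differentiable (by norm_num) t).hasDerivAt
    have hh₁ : ∀ t, HasDerivAt (deriv h) (deriv (deriv h) t) t := fun t =>
      ((h_smooth.differentiable_deriv_two) t).hasDerivAt
    obtain ⟨σ, hσ⟩ : ∃ σ, σ = avg (fun t => y t * h t) := ⟨_, rfl⟩
    obtain ⟨τ, hτ⟩ : ∃ τ, τ = avg (fun t => y t ^ 3 * h t) := ⟨_, rfl⟩
    have avg_gh : avg (fun t => c * y t * h t) = c * σ := by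
      simp only [mul_assoc, avg_const_mul, hσ]
    have avg_cube : avg (fun t => (c * y t) ^ 3 * h t) = c ^ 3 * τ := by
      simp only [mul_pow, mul_assoc, avg_const_mul, hτ]
    simp only [avg_sq, avg_four, avg_gh, avg_cube] at h_eq
    obtain ⟨κ, hκ⟩ : ∃ κ, κ = 2 * c ^ 6 * (τ + 3 * b * σ) := ⟨_, rfl⟩
    have zero_of_odd : ∀ f : ℝ → ℝ, (∀ t, f (-t) = -f t) → f 0 = 0 := fun f hf => by
      have := hf 0
      rw [neg_zero] at this
      linarith
    have y_zero := zero_of_odd y y_odd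
    have h_zero := zero_of_odd h h_odd
    have y_two_pi : y (2 * π) = 0 := by rw [← y_zero, ← zero_add (2 * π), y_periodic]
    have h_two_pi : h (2 * π) = 0 := by rw [← h_zero, ← zero_add (2 * π), h_periodic]
    have deriv_two_pi : ∀ f : ℝ → ℝ, Function.Periodic f (2 * π) →
        deriv f (2 * π) = deriv f 0 := fun f hf => by
      rw [← zero_add (2 * π), ← deriv_comp_add_const, funext hf]
    have y₁_two_pi : y₁ (2 * π) = y₁ 0 := deriv_y ▸ deriv_two_pi y y_periodic
    have h₁_two_pi := deriv_two_pi h h_periodic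
    have key : ∀ t, h t + κ * y t = 0 :=
      eq_zero_of_linearized_duffing (h := fun t => h t + κ * y t)
        (h₁ := fun t => deriv h t + κ * y₁ t) (s := σ + κ * b)
        hy hy₁ energy y_zero y_two_pi y₁_two_pi hb e_pos
        (fun t => (hh t).add ((hy t).const_mul κ))
        (fun t => by
          refine ((hh₁ t).add ((hy₁ t).const_mul κ)).congr_deriv ?_
          linear_combination h_eq t + 2 * (3 * b * y t + y t ^ 3) * hκ
            - (3 * (b + y t ^ 2) * h t + 6 * y t * σ) * hc)
        (by
          have : ∀ t, y t * (h t + κ * y t) = y t * h t + κ * y t ^ 2 := fun t => by ring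
          simp only [this]
          rw [avg_add (f := fun t => y t * h t) (g := fun t => κ * y t ^ 2) (by fun_prop)
            (by fun_prop), avg_const_mul, hb, hσ])
        (by simp [h_zero, y_zero]) (by simp [h_two_pi, y_two_pi])
        (by simp [h₁_two_pi, y₁_two_pi])
    have h_eq_mul : ∀ t, h t = -κ * y t := fun t => by linear_combination key t
    have σ_eq : σ = -κ * b := by
      rw [hσ, ← hb, ← avg_const_mul]
      congr 1; funext t; rw [h_eq_mul]; ring
    have τ_eq : τ = -κ * a := by
      rw [hτ, ha, ← avg_const_mul]
      congr 1; funext t; rw [h_eq_mul]; ring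
    have κ_zero : κ = 0 := by
      rw [σ_eq, τ_eq] at hκ
      linear_combination (1 / 3) * hκ - (2 / 3) * κ * hc
    funext t
    simp [h_eq_mul t, κ_zero]
end

section
/- Let g : ℝ → ℝ be real-analytic, odd, 2π-periodic, not identically zero, and satisfy g'' + A(g)(3⟨g²⟩ g + g³) = 0 on ℝ, where A(g) := ⟨g⁴⟩ + 3⟨g²⟩². Consider the homogeneous linear equation (HOM): h''(t) + 3A(g)(⟨g²⟩ + g(t)²) h(t) = 0. Then: (i) g'(0) ≠ 0, and ū(t) := g'(t)/g'(0) is an even, 2π-periodic solution of (HOM) with ū(0) = 1, ū'(0) = 0; (ii) the solution v̄ of (HOM) with v̄(0) = 0, v̄'(0) = 1 is odd and not periodic; (iii) there exists ρ > 0 such that v̄(t + 2π) − v̄(t) = ρ ū(t) for all t ∈ ℝ. -/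
open Real

/-- The Wronskian of two solutions of `y'' + q y = 0` is constant. -/
theorem wronskian_eq {q u u' v v' : ℝ → ℝ}
    (hu : ∀ t, HasDerivAt u (u' t) t) (hu' : ∀ t, HasDerivAt u' (-(q t * u t)) t)
    (hv : ∀ t, HasDerivAt v (v' t) t) (hv' : ∀ t, HasDerivAt v' (-(q t * v t)) t) (t : ℝ) :
    u t * v' t - u' t * v t = u 0 * v' 0 - u' 0 * v 0 := by
  have h : ∀ s, HasDerivAt (fun s => u s * v' s - u' s * v s) 0 s := fun s => by
    refine HasDerivAt.congr_deriv (((hu s).fun_mul (hv' s)).fun_sub ((hu' s).fun_mul (hv s))) ?_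
    ring
  exact is_const_of_deriv_eq_zero (fun s => (h s).differentiableAt) (fun s => (h s).deriv) t 0

/-- Two solutions of `y'' + q y = 0` vanishing at `0` are proportional, provided the equation has a
solution which does not vanish at `0`. -/
theorem proportional_of_eq_zero {q u u' v v' x x' : ℝ → ℝ}
    (hu : ∀ t, HasDerivAt u (u' t) t) (hu' : ∀ t, HasDerivAt u' (-(q t * u t)) t)
    (hv : ∀ t, HasDerivAt v (v' t) t) (hv' : ∀ t, HasDerivAt v' (-(q t * v t)) t)
    (hx : ∀ t, HasDerivAt x (x' t) t) (hx' : ∀ t, HasDerivAt x' (-(q t * x t)) t)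
    (hu0 : u 0 ≠ 0) (hv0 : v 0 = 0) (hx0 : x 0 = 0) (t : ℝ) :
    v' 0 * x t = x' 0 * v t := by
  have h₁ := wronskian_eq hu hu' hv hv' t
  have h₂ := wronskian_eq hu hu' hx hx' t
  have h₃ := wronskian_eq hv hv' hx hx' t
  simp only [hv0, hx0, mul_zero, zero_mul, sub_zero] at h₁ h₂ h₃
  apply mul_left_cancel₀ hu0
  linear_combination v t * h₂ - x t * h₁ - u t * h₃

section Duffing

variable {g g' : ℝ → ℝ} {a b : ℝ}

/-- Conservation of energy for the Duffing equation `g'' + a g + b g³ = 0`. -/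
theorem duffing_energy (hg : ∀ t, HasDerivAt g (g' t) t)
    (hg' : ∀ t, HasDerivAt g' (-(a * g t + b * g t ^ 3)) t) (h0 : g 0 = 0) (t : ℝ) :
    2 * g' t ^ 2 + 2 * a * g t ^ 2 + b * g t ^ 4 = 2 * g' 0 ^ 2 := by
  have h : ∀ s, HasDerivAt (fun s => 2 * g' s ^ 2 + 2 * a * g s ^ 2 + b * g s ^ 4) 0 s :=
    fun s => by
      refine HasDerivAt.congr_deriv (((((hg' s).fun_pow 2).const_mul 2).fun_add
        (((hg s).fun_pow 2).const_mul (2 * a))).fun_add (((hg s).fun_pow 4).const_mul b)) ?_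
      push_cast
      ring
  have := is_const_of_deriv_eq_zero (fun s => (h s).differentiableAt) (fun s => (h s).deriv) t 0
  simpa [h0] using this

/-- The derivative of a solution of the Duffing equation solves the linearized equation. -/
theorem duffing_hasDerivAt_deriv (hg : ∀ t, HasDerivAt g (g' t) t) (t : ℝ) :
    HasDerivAt (fun s => -(a * g s + b * g s ^ 3)) (-((a + 3 * b * g t ^ 2) * g' t)) t := by
  refine HasDerivAt.congr_deriv ((((hg t).const_mul a).fun_add
    (((hg t).fun_pow 3).const_mul b)).fun_neg) ?_
  push_cast
  ring

/-- A second solution of the linearized Duffing equation, where `G` is a primitive of `g ^ 2`. -/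
noncomputable def duffingSecond (g g' G : ℝ → ℝ) (a b D : ℝ) (t : ℝ) : ℝ :=
  g t ^ 3 + (2 * a / b + D) * g t + g' t * (D * t - G t)

/-- The derivative of `duffingSecond`. -/
noncomputable def duffingSecondDeriv (g g' G : ℝ → ℝ) (a b D : ℝ) (t : ℝ) : ℝ :=
  2 * g t ^ 2 * g' t + (2 * a / b + 2 * D) * g' t - (a * g t + b * g t ^ 3) * (D * t - G t)

variable {G : ℝ → ℝ} {D : ℝ}

theorem hasDerivAt_duffingSecond (hg : ∀ t, HasDerivAt g (g' t) t)
    (hg' : ∀ t, HasDerivAt g' (-(a * g t + b * g t ^ 3)) t)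
    (hG : ∀ t, HasDerivAt G (g t ^ 2) t) (t : ℝ) :
    HasDerivAt (duffingSecond g g' G a b D) (duffingSecondDeriv g g' G a b D t) t := by
  unfold duffingSecond duffingSecondDeriv
  refine HasDerivAt.congr_deriv ((((hg t).fun_pow 3).fun_add
    ((hg t).const_mul (2 * a / b + D))).fun_add
    ((hg' t).fun_mul (((hasDerivAt_id' t).const_mul D).fun_sub (hG t)))) ?_
  push_cast
  ring

theorem hasDerivAt_duffingSecondDeriv (hg : ∀ t, HasDerivAt g (g' t) t)
    (hg' : ∀ t, HasDerivAt g' (-(a * g t + b * g t ^ 3)) t)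
    (hG : ∀ t, HasDerivAt G (g t ^ 2) t) (h0 : g 0 = 0) (hb : b ≠ 0)
    (hD : a * D = 2 * g' 0 ^ 2) (t : ℝ) :
    HasDerivAt (duffingSecondDeriv g g' G a b D)
      (-((a + 3 * b * g t ^ 2) * duffingSecond g g' G a b D t)) t := by
  unfold duffingSecond duffingSecondDeriv
  have hE := duffing_energy hg hg' h0 t
  obtain ⟨k, hk⟩ : ∃ k, k = 2 * a / b := ⟨_, rfl⟩
  have hk' : b * k = 2 * a := by rw [hk]; field_simp
  rw [← hk]
  refine HasDerivAt.congr_deriv ((((((hg t).fun_pow 2).const_mul 2).fun_mul (hg' t)).fun_add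
    ((hg' t).const_mul (k + 2 * D))).fun_add
    ((duffing_hasDerivAt_deriv (a := a) (b := b) hg t).fun_mul
      (((hasDerivAt_id' t).const_mul D).fun_sub (hG t)))
    |>.congr_of_eventuallyEq (.of_forall fun s => by ring)) ?_
  push_cast
  linear_combination (2 * g t) * (hE - hD) + 2 * g t ^ 3 * hk'

theorem duffingSecond_neg (hg : ∀ t, g (-t) = -g t) (hg' : ∀ t, g' (-t) = g' t)
    (hG : ∀ t, G (-t) = -G t) (t : ℝ) :
    duffingSecond g g' G a b D (-t) = -duffingSecond g g' G a b D t := by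
  simp only [duffingSecond, hg, hg', hG]
  ring

theorem duffingSecond_add_period {T M : ℝ} (hg : Function.Periodic g T)
    (hg' : Function.Periodic g' T) (hG : ∀ t, G (t + T) = G t + M) (t : ℝ) :
    duffingSecond g g' G a b D (t + T) - duffingSecond g g' G a b D t
      = (D * T - M) * g' t := by
  simp only [duffingSecond, hg t, hg' t, hG]
  ring

end Duffing

/-- A continuous function whose increments over a length `T` form a `T`-periodic function that does
not vanish at `0` is not periodic. -/
theorem not_periodic_of_add_sub_eq {v w : ℝ → ℝ} {T : ℝ} (hv : Continuous v)
    (hw : Function.Periodic w T) (hw0 : w 0 ≠ 0) (h : ∀ t, v (t + T) - v t = w t) :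
    ¬ ∃ p : ℝ, 0 < p ∧ Function.Periodic v p := by
  rintro ⟨p, hp, hvp⟩
  obtain ⟨C, hC⟩ := (hvp.isBounded_of_continuous hp.ne' hv).exists_norm_le
  have key : ∀ n : ℕ, v (n * T) = v 0 + n * w 0 := by
    intro n
    induction n with
    | zero => simp
    | succ n ih =>
      have h₁ := h (n * T)
      have h₂ : w (n * T) = w 0 := by simpa using hw.nat_mul n 0
      push_cast
      rw [add_mul, one_mul]
      linear_combination h₁ + ih + h₂
  obtain ⟨n, hn⟩ := exists_nat_gt (2 * C / |w 0|)
  rw [div_lt_iff₀ (abs_pos.2 hw0)] at hn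
  have h₁ : |v (n * T)| ≤ C := hC _ ⟨_, rfl⟩
  have h₂ : |v 0| ≤ C := hC _ ⟨_, rfl⟩
  have h₃ : (n : ℝ) * |w 0| = |v (n * T) - v 0| := by
    rw [key n, add_sub_cancel_left, abs_mul, Nat.abs_cast]
  have h₄ := abs_sub (v (n * T)) (v 0)
  linarith

theorem avg_sq_pos {g : ℝ → ℝ} (hg : Continuous g) (hper : Function.Periodic g (2 * π))
    (hne : g ≠ 0) : 0 < avg (fun s => g s ^ 2) := by
  obtain ⟨t, ht⟩ := Function.ne_iff.1 hne
  obtain ⟨y, hy, hty⟩ := hper.exists_mem_Ico₀ two_pi_pos t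
  have hy0 : g y ≠ 0 := hty ▸ ht
  exact mul_pos (by positivity) (intervalIntegral.integral_pos two_pi_pos
    (hg.pow 2).continuousOn (fun s _ => sq_nonneg _) ⟨y, ⟨hy.1, hy.2.le⟩, by positivity⟩)

theorem avg_nonneg {f : ℝ → ℝ} (hf : ∀ t, 0 ≤ f t) : 0 ≤ avg f :=
  mul_nonneg (by positivity)
    (intervalIntegral.integral_nonneg two_pi_pos.le fun s _ => hf s)

theorem two_pi_mul_avg (f : ℝ → ℝ) : 2 * π * avg f = ∫ t in (0:ℝ)..(2 * π), f t := by
  unfold avg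
  field_simp

theorem avg_le_of_le {f : ℝ → ℝ} {C : ℝ} (hf : Continuous f) (h : ∀ t, f t ≤ C) : avg f ≤ C := by
  have h₁ := intervalIntegral.integral_mono_on (μ := MeasureTheory.volume) two_pi_pos.le
    (hf.intervalIntegrable 0 (2 * π)) (continuous_const.intervalIntegrable 0 (2 * π))
    (fun s _ => h s)
  rw [← two_pi_mul_avg, intervalIntegral.integral_const, smul_eq_mul, sub_zero] at h₁
  exact le_of_mul_le_mul_left h₁ two_pi_pos

theorem stmt_2 (g : ℝ → ℝ)
    (han : ∀ t : ℝ, AnalyticAt ℝ g t)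
    (hodd : ∀ t : ℝ, g (-t) = -g t)
    (hper : Function.Periodic g (2 * π))
    (hne : g ≠ 0)
    (A : ℝ) (hA : A = avg (fun s => g s ^ 4) + 3 * avg (fun s => g s ^ 2) ^ 2)
    (hode : ∀ t : ℝ, deriv (deriv g) t
        + A * (3 * avg (fun s => g s ^ 2) * g t + g t ^ 3) = 0) :
    -- (i)  g'(0) ≠ 0 and ū := g'/g'(0) is an even, 2π-periodic solution of (HOM)
    deriv g 0 ≠ 0 ∧
    (∀ t : ℝ, (fun t => deriv g t / deriv g 0) (-t) = (fun t => deriv g t / deriv g 0) t) ∧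
    Function.Periodic (fun t => deriv g t / deriv g 0) (2 * π) ∧
    (∀ t : ℝ, deriv (deriv (fun t => deriv g t / deriv g 0)) t
        + 3 * A * (avg (fun s => g s ^ 2) + g t ^ 2)
          * (fun t => deriv g t / deriv g 0) t = 0) ∧
    (fun t => deriv g t / deriv g 0) 0 = 1 ∧
    deriv (fun t => deriv g t / deriv g 0) 0 = 0 ∧
    -- (ii), (iii)  the solution v̄ with v̄(0) = 0, v̄'(0) = 1 is odd, not periodic,
    -- and v̄(t + 2π) − v̄(t) = ρ ū(t) for some ρ > 0
    (∀ v : ℝ → ℝ, ContDiff ℝ 2 v →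
      (∀ t : ℝ, deriv (deriv v) t + 3 * A * (avg (fun s => g s ^ 2) + g t ^ 2) * v t = 0) →
      v 0 = 0 → deriv v 0 = 1 →
      (∀ t : ℝ, v (-t) = -v t) ∧
      (¬ ∃ p : ℝ, 0 < p ∧ Function.Periodic v p) ∧
      (∃ ρ : ℝ, 0 < ρ ∧ ∀ t : ℝ, v (t + 2 * π) - v t = ρ * (deriv g t / deriv g 0))) := by
  have hgd : ∀ t, HasDerivAt g (deriv g t) t := fun t => (han t).differentiableAt.hasDerivAt
  have hgc : Continuous g := continuous_iff_continuousAt.2 fun t => (han t).continuousAt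
  obtain ⟨m, hm⟩ : ∃ m, m = avg (fun s => g s ^ 2) := ⟨_, rfl⟩
  have hmpos : 0 < m := hm ▸ avg_sq_pos hgc hper hne
  rw [← hm] at hA hode ⊢
  have hApos : 0 < A := by
    have : 0 ≤ avg (fun s => g s ^ 4) := avg_nonneg fun t => by positivity
    rw [hA]
    positivity
  obtain ⟨a, ha⟩ : ∃ a, a = 3 * A * m := ⟨_, rfl⟩
  have hapos : 0 < a := by rw [ha]; positivity
  have hgd' : ∀ t, HasDerivAt (deriv g) (-(a * g t + A * g t ^ 3)) t := fun t => by
    refine HasDerivAt.congr_deriv ((han t).deriv.differentiableAt.hasDerivAt) ?_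
    rw [ha]
    linear_combination hode t
  have hg0 : g 0 = 0 := by
    have := hodd 0
    rw [neg_zero] at this
    linarith
  have hE := duffing_energy hgd hgd' hg0
  have hp : deriv g 0 ≠ 0 := by
    intro hp
    apply hne
    funext t
    have h₁ := hE t
    rw [hp] at h₁
    have h₂ : 0 ≤ A * g t ^ 4 := by positivity
    have h₃ : a * g t ^ 2 ≤ 0 := by nlinarith [sq_nonneg (deriv g t)]
    have h₄ : g t ^ 2 ≤ 0 := nonpos_of_mul_nonpos_right h₃ hapos
    exact pow_eq_zero_iff two_ne_zero |>.1 (le_antisymm h₄ (sq_nonneg _))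
  have heven : ∀ t, deriv g (-t) = deriv g t := fun t => by
    have h₁ : HasDerivAt (fun s => -g (-s)) (deriv g (-t)) t := by
      simpa using ((hgd (-t)).scomp t (hasDerivAt_neg t)).fun_neg
    have h₂ : (fun s => -g (-s)) = g := by
      funext s
      rw [hodd, neg_neg]
    rw [h₂] at h₁
    exact h₁.deriv.symm
  have hper' : Function.Periodic (deriv g) (2 * π) := fun t => by
    rw [← deriv_comp_add_const]
    congr 1
    funext s
    exact hper s
  have hlin : ∀ t, HasDerivAt (fun s => -(a * g s + A * g s ^ 3))
      (-((a + 3 * A * g t ^ 2) * deriv g t)) t := duffing_hasDerivAt_deriv hgd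
  have hu : deriv (fun t => deriv g t / deriv g 0)
      = fun t => -(a * g t + A * g t ^ 3) / deriv g 0 :=
    funext fun t => ((hgd' t).div_const _).deriv
  refine ⟨hp, fun t => by simp only [heven], fun t => by simp only [hper' t], fun t => ?_,
    div_self hp, ?_, fun v hv hvode hv0 hv1 => ?_⟩
  · rw [hu, ((hlin t).div_const _).deriv, ha]
    ring
  · rw [hu]
    simp [hg0]
  obtain ⟨G, hGdef⟩ : ∃ G : ℝ → ℝ, G = fun t => ∫ s in (0:ℝ)..t, g s ^ 2 := ⟨_, rfl⟩
  have hsq : Continuous fun s => g s ^ 2 := hgc.pow 2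
  have hG : ∀ t, HasDerivAt G (g t ^ 2) t := fun t => by
    rw [hGdef]
    exact hsq.integral_hasStrictDerivAt 0 t |>.hasDerivAt
  have hGodd : ∀ t, G (-t) = -G t := fun t => by
    have := intervalIntegral.integral_comp_neg (a := 0) (b := t) fun s => g s ^ 2
    simp only [hodd, neg_sq, neg_zero] at this
    simp only [hGdef]
    rw [this, intervalIntegral.integral_symm]
  have hGper : ∀ t, G (t + 2 * π) = G t + 2 * π * m := fun t => by
    have hsqper : Function.Periodic (fun s => g s ^ 2) (2 * π) := fun s => by simp only [hper s]
    have := hsqper.intervalIntegral_add_eq t 0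
    rw [zero_add, ← two_pi_mul_avg, ← hm] at this
    simp only [hGdef]
    rw [← this, intervalIntegral.integral_add_adjacent_intervals] <;>
      exact hsq.intervalIntegrable _ _
  have hG0 : G 0 = 0 := by simp [hGdef]
  obtain ⟨D, hDdef⟩ : ∃ D, D = 2 * deriv g 0 ^ 2 / a := ⟨_, rfl⟩
  have hD : a * D = 2 * deriv g 0 ^ 2 := by
    rw [hDdef]
    field_simp
  have hDpos : 0 < D := by rw [hDdef]; positivity
  have hmD : m < D := by
    have : m ≤ D / 2 := by
      rw [hm]
      refine avg_le_of_le hsq fun t => le_of_mul_le_mul_left ?_ hapos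
      have h₁ : 0 ≤ A * g t ^ 4 := by positivity
      nlinarith [hE t, sq_nonneg (deriv g t)]
    linarith
  have hvd : ∀ t, HasDerivAt v (deriv v t) t := fun t =>
    (hv.differentiable two_ne_zero t).hasDerivAt
  have hvd' : ∀ t, HasDerivAt (deriv v) (-((a + 3 * A * g t ^ 2) * v t)) t := fun t => by
    have hd : Differentiable ℝ (deriv v) :=
      ((contDiff_succ_iff_deriv (n := 1)).1 hv).2.2.differentiable one_ne_zero
    refine HasDerivAt.congr_deriv ((hd t).hasDerivAt) ?_
    rw [ha]
    linear_combination hvode t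
  obtain ⟨k, hk⟩ : ∃ k, k = 2 * a / A + 2 * D := ⟨_, rfl⟩
  have hkpos : 0 < k := by rw [hk]; positivity
  have hvw : ∀ t, k * deriv g 0 * v t = duffingSecond g (deriv g) G a A D t := fun t => by
    have := proportional_of_eq_zero (q := fun t => a + 3 * A * g t ^ 2) hgd' hlin
      (hasDerivAt_duffingSecond (D := D) hgd hgd' hG)
      (hasDerivAt_duffingSecondDeriv hgd hgd' hG hg0 hApos.ne' hD) hvd hvd' hp
      (by simp [duffingSecond, hg0, hG0]) hv0 t
    rw [hv1, one_mul] at this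
    rw [← this, duffingSecondDeriv, hg0, hk]
    ring
  have hkp : k * deriv g 0 ≠ 0 := mul_ne_zero hkpos.ne' hp
  have hρ : 0 < 2 * π * (D - m) / k := div_pos (mul_pos two_pi_pos (sub_pos.2 hmD)) hkpos
  have hinc : ∀ t, v (t + 2 * π) - v t
      = 2 * π * (D - m) / k * (deriv g t / deriv g 0) := fun t => by
    have := duffingSecond_add_period (a := a) (b := A) (D := D) hper hper' hGper t
    rw [← hvw, ← hvw] at this
    field_simp
    linear_combination this
  refine ⟨fun t => mul_left_cancel₀ hkp ?_, ?_, _, hρ, hinc⟩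
  · rw [hvw, duffingSecond_neg hodd heven hGodd, ← hvw, mul_neg]
  · refine not_periodic_of_add_sub_eq hv.continuous (fun t => ?_) ?_ hinc
    · simp only [hper' t]
    · rw [div_self hp, mul_one]
      exact hρ.ne'
end

section
/- Let q : ℝ → ℝ be continuous, even and 2π-periodic, and let ū, v̄ : ℝ → ℝ be the solutions of h'' + q h = 0 with ū(0) = 1, ū'(0) = 0 and v̄(0) = 0, v̄'(0) = 1. Assume ū is 2π-periodic and that there is ρ ≠ 0 with v̄(t + 2π) − v̄(t) = ρ ū(t) for all t. Then for every continuous, odd, 2π-periodic f : ℝ → ℝ, the function H(t) := (∫₀^t f(s)ū(s) ds + (1/ρ)∫₀^{2π} f(s)v̄(s) ds)·v̄(t) − (∫₀^t f(s)v̄(s) ds)·ū(t) is the unique C², odd, 2π-periodic function satisfying H''(t) + q(t)H(t) = f(t) for all t ∈ ℝ. -/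
open Real

/-- The Green-operator integral formula
`H(t) = (∫₀ᵗ f ū + (1/ρ)∫₀^{2π} f v̄) v̄(t) − (∫₀ᵗ f v̄) ū(t)`. -/
noncomputable def greenH (ρ : ℝ) (f u v : ℝ → ℝ) : ℝ → ℝ := fun t =>
  ((∫ s in (0:ℝ)..t, f s * u s) + (1 / ρ) * ∫ s in (0:ℝ)..(2 * π), f s * v s) * v t
    - (∫ s in (0:ℝ)..t, f s * v s) * u t

/-- Two solutions of `h'' + q h = 0` have constant Wronskian. -/
lemma wronskian_eq_of_linear_ode {q y z : ℝ → ℝ} (hy : ContDiff ℝ 2 y) (hz : ContDiff ℝ 2 z)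
    (hyode : ∀ t : ℝ, deriv (deriv y) t + q t * y t = 0)
    (hzode : ∀ t : ℝ, deriv (deriv z) t + q t * z t = 0) (t : ℝ) :
    y t * deriv z t - deriv y t * z t = y 0 * deriv z 0 - deriv y 0 * z 0 := by
  have hderiv : ∀ s, HasDerivAt (fun x => y x * deriv z x - deriv y x * z x) 0 s := by
    intro s
    have y1 := (hy.differentiable two_ne_zero s).hasDerivAt
    have z1 := (hz.differentiable two_ne_zero s).hasDerivAt
    have y2 := (hy.differentiable_deriv_two s).hasDerivAt
    have z2 := (hz.differentiable_deriv_two s).hasDerivAt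
    refine ((y1.mul z2).sub (y2.mul z1)).congr_deriv ?_
    linear_combination y s * hzode s - z s * hyode s
  exact is_const_of_deriv_eq_zero (fun s => (hderiv s).differentiableAt)
    (fun s => (hderiv s).deriv) t 0

/-- A solution of `h'' + q h = 0` is determined by its initial values through a normalized
fundamental system. -/
lemma eq_fundamental_combination {q u v y : ℝ → ℝ}
    (hu : ContDiff ℝ 2 u) (hv : ContDiff ℝ 2 v) (hy : ContDiff ℝ 2 y)
    (huode : ∀ t : ℝ, deriv (deriv u) t + q t * u t = 0)
    (hvode : ∀ t : ℝ, deriv (deriv v) t + q t * v t = 0)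
    (hyode : ∀ t : ℝ, deriv (deriv y) t + q t * y t = 0)
    (hu0 : u 0 = 1) (hu0' : deriv u 0 = 0) (hv0 : v 0 = 0) (hv0' : deriv v 0 = 1) (t : ℝ) :
    y t = y 0 * u t + deriv y 0 * v t := by
  have huv := wronskian_eq_of_linear_ode hu hv huode hvode t
  have hyv := wronskian_eq_of_linear_ode hy hv hyode hvode t
  have huy := wronskian_eq_of_linear_ode hu hy huode hyode t
  rw [hu0, hu0', hv0, hv0'] at huv
  rw [hv0, hv0'] at hyv
  rw [hu0, hu0'] at huy
  linear_combination (-y t) * huv + u t * hyv + v t * huy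

/-- The reflection of a solution of `h'' + q h = 0` with `q` even is again a solution. -/
lemma linear_ode_comp_neg {q y : ℝ → ℝ} (hqe : ∀ t : ℝ, q (-t) = q t)
    (hyode : ∀ t : ℝ, deriv (deriv y) t + q t * y t = 0) (t : ℝ) :
    deriv (deriv fun x => y (-x)) t + q t * y (-t) = 0 := by
  have h1 : (deriv fun x => y (-x)) = fun x => -deriv y (-x) := by
    funext x
    exact deriv_comp_neg y x
  rw [h1, deriv.fun_neg, deriv_comp_neg (deriv y) t, neg_neg, ← hqe t]
  exact hyode (-t)

lemma integral_neg_of_odd {g : ℝ → ℝ} (hg : ∀ t, g (-t) = -g t) (t : ℝ) :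
    ∫ s in (0:ℝ)..(-t), g s = ∫ s in (0:ℝ)..t, g s := by
  have h := intervalIntegral.integral_comp_neg (a := 0) (b := t) g
  simp only [hg, intervalIntegral.integral_neg, neg_zero] at h
  rw [intervalIntegral.integral_symm, ← h, neg_neg]

lemma integral_neg_of_even {g : ℝ → ℝ} (hg : ∀ t, g (-t) = g t) (t : ℝ) :
    ∫ s in (0:ℝ)..(-t), g s = -∫ s in (0:ℝ)..t, g s := by
  have h := intervalIntegral.integral_comp_neg (a := 0) (b := t) g
  simp only [hg, neg_zero] at h
  rw [intervalIntegral.integral_symm, ← h]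

lemma integral_period_eq_zero_of_odd {g : ℝ → ℝ} {T : ℝ} (hg : ∀ t, g (-t) = -g t)
    (hgp : Function.Periodic g T) : ∫ s in (0:ℝ)..T, g s = 0 := by
  have h1 := hgp.intervalIntegral_add_eq (-T) 0
  rw [neg_add_cancel, zero_add, intervalIntegral.integral_symm, integral_neg_of_odd hg] at h1
  linarith

/-- Variation of parameters: the first derivative of `greenH`. -/
lemma hasDerivAt_greenH {ρ : ℝ} {f u v : ℝ → ℝ} (hf : Continuous f)
    (hu : Differentiable ℝ u) (hv : Differentiable ℝ v) (t : ℝ) :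
    HasDerivAt (greenH ρ f u v)
      (((∫ s in (0:ℝ)..t, f s * u s) + (1 / ρ) * ∫ s in (0:ℝ)..(2 * π), f s * v s) * deriv v t
        - (∫ s in (0:ℝ)..t, f s * v s) * deriv u t) t := by
  have hA := ((hf.mul hu.continuous).integral_hasStrictDerivAt 0 t).hasDerivAt.add_const
    ((1 / ρ) * ∫ s in (0:ℝ)..(2 * π), f s * v s)
  have hB := ((hf.mul hv.continuous).integral_hasStrictDerivAt 0 t).hasDerivAt
  refine ((hA.mul (hv t).hasDerivAt).sub (hB.mul (hu t).hasDerivAt)).congr_deriv ?_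
  simp only [Pi.mul_apply]
  ring

/-- Variation of parameters: the second derivative of `greenH`. -/
lemma hasDerivAt_deriv_greenH {ρ : ℝ} {f u v : ℝ → ℝ} (hf : Continuous f)
    (hu : ContDiff ℝ 2 u) (hv : ContDiff ℝ 2 v) (t : ℝ) :
    HasDerivAt (deriv (greenH ρ f u v))
      (((∫ s in (0:ℝ)..t, f s * u s) + (1 / ρ) * ∫ s in (0:ℝ)..(2 * π), f s * v s)
          * deriv (deriv v) t
        - (∫ s in (0:ℝ)..t, f s * v s) * deriv (deriv u) t
        + f t * (u t * deriv v t - deriv u t * v t)) t := by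
  have hderiv := funext fun x => (hasDerivAt_greenH (ρ := ρ) hf
    (hu.differentiable two_ne_zero) (hv.differentiable two_ne_zero) x).deriv
  rw [hderiv]
  have hA := ((hf.mul hu.continuous).integral_hasStrictDerivAt 0 t).hasDerivAt.add_const
    ((1 / ρ) * ∫ s in (0:ℝ)..(2 * π), f s * v s)
  have hB := ((hf.mul hv.continuous).integral_hasStrictDerivAt 0 t).hasDerivAt
  refine ((hA.mul (hv.differentiable_deriv_two t).hasDerivAt).sub
    (hB.mul (hu.differentiable_deriv_two t).hasDerivAt)).congr_deriv ?_
  simp only [Pi.mul_apply]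
  ring

lemma greenH_neg {f u v : ℝ → ℝ} (ρ : ℝ) (hfo : ∀ t : ℝ, f (-t) = -f t)
    (hue : ∀ t, u (-t) = u t) (hvo : ∀ t, v (-t) = -v t) (t : ℝ) :
    greenH ρ f u v (-t) = -greenH ρ f u v t := by
  have hA := integral_neg_of_odd (g := fun s => f s * u s) (fun s => by rw [hfo, hue]; ring) t
  have hB := integral_neg_of_even (g := fun s => f s * v s) (fun s => by rw [hfo, hvo]; ring) t
  simp only [greenH, hA, hB, hue, hvo]
  ring

lemma greenH_periodic {f u v : ℝ → ℝ} {ρ : ℝ} (hρ : ρ ≠ 0) (hf : Continuous f)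
    (hu : Continuous u) (hv : Continuous v)
    (hfo : ∀ t : ℝ, f (-t) = -f t) (hue : ∀ t, u (-t) = u t)
    (hfp : Function.Periodic f (2 * π)) (hup : Function.Periodic u (2 * π))
    (hρv : ∀ t : ℝ, v (t + 2 * π) - v t = ρ * u t) :
    Function.Periodic (greenH ρ f u v) (2 * π) := by
  intro t
  have hvt : ∀ s, v (s + 2 * π) = v s + ρ * u s := fun s => by linarith [hρv s]
  have hshift : ∀ g : ℝ → ℝ, Continuous g → ∫ s in (0:ℝ)..(t + 2 * π), g s =
      (∫ s in (0:ℝ)..(2 * π), g s) + ∫ s in (0:ℝ)..t, g (s + 2 * π) := by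
    intro g hg
    rw [intervalIntegral.integral_comp_add_right, zero_add,
      intervalIntegral.integral_add_adjacent_intervals
        (hg.intervalIntegrable _ _) (hg.intervalIntegrable _ _)]
  have hA : ∫ s in (0:ℝ)..(t + 2 * π), f s * u s = ∫ s in (0:ℝ)..t, f s * u s := by
    rw [hshift (fun s => f s * u s) (hf.mul hu), integral_period_eq_zero_of_odd (g := fun s => f s * u s)
      (fun s => by rw [hfo, hue]; ring) (hfp.mul hup), zero_add]
    simp only [hfp _, hup _]
  have hB : ∫ s in (0:ℝ)..(t + 2 * π), f s * v s = (∫ s in (0:ℝ)..(2 * π), f s * v s)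
      + ((∫ s in (0:ℝ)..t, f s * v s) + ρ * ∫ s in (0:ℝ)..t, f s * u s) := by
    rw [hshift (fun s => f s * v s) (hf.mul hv), ← intervalIntegral.integral_const_mul,
      ← intervalIntegral.integral_add (Continuous.intervalIntegrable (by fun_prop) _ _)
        (Continuous.intervalIntegrable (by fun_prop) _ _)]
    congr 2
    funext s
    rw [hfp s, hvt s]
    ring
  simp only [greenH, hA, hB, hup t, hvt t]
  field_simp
  ring

theorem stmt_3 (q u v : ℝ → ℝ)
    (hq : Continuous q) (hqe : ∀ t : ℝ, q (-t) = q t) (hqp : Function.Periodic q (2 * π))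
    (hu : ContDiff ℝ 2 u) (hv : ContDiff ℝ 2 v)
    (huode : ∀ t : ℝ, deriv (deriv u) t + q t * u t = 0)
    (hvode : ∀ t : ℝ, deriv (deriv v) t + q t * v t = 0)
    (hu0 : u 0 = 1) (hu0' : deriv u 0 = 0) (hv0 : v 0 = 0) (hv0' : deriv v 0 = 1)
    (hup : Function.Periodic u (2 * π))
    (ρ : ℝ) (hρ : ρ ≠ 0) (hρv : ∀ t : ℝ, v (t + 2 * π) - v t = ρ * u t)
    (f : ℝ → ℝ) (hf : Continuous f) (hfo : ∀ t : ℝ, f (-t) = -f t)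
    (hfp : Function.Periodic f (2 * π)) :
    (ContDiff ℝ 2 (greenH ρ f u v) ∧
      (∀ t : ℝ, greenH ρ f u v (-t) = -greenH ρ f u v t) ∧
      Function.Periodic (greenH ρ f u v) (2 * π) ∧
      (∀ t : ℝ, deriv (deriv (greenH ρ f u v)) t + q t * greenH ρ f u v t = f t)) ∧
    (∀ G : ℝ → ℝ, ContDiff ℝ 2 G → (∀ t : ℝ, G (-t) = -G t) →
      Function.Periodic G (2 * π) →
      (∀ t : ℝ, deriv (deriv G) t + q t * G t = f t) →
      G = greenH ρ f u v) := by
  have hue : ∀ t, u (-t) = u t := fun t => by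
    have h := eq_fundamental_combination (y := fun x => u (-x)) hu hv (hu.comp contDiff_neg) huode hvode
      (linear_ode_comp_neg hqe huode) hu0 hu0' hv0 hv0' t
    have hd : deriv (fun x => u (-x)) 0 = 0 := by
      simpa [hu0'] using deriv_comp_neg u 0
    simpa [hd, hu0] using h
  have hvo : ∀ t, v (-t) = -v t := fun t => by
    have h := eq_fundamental_combination (y := fun x => v (-x)) hu hv (hv.comp contDiff_neg) huode hvode
      (linear_ode_comp_neg hqe hvode) hu0 hu0' hv0 hv0' t
    have hd : deriv (fun x => v (-x)) 0 = -1 := by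
      simpa [hv0'] using deriv_comp_neg v 0
    simpa [hd, hv0] using h
  have hHode : ∀ t, deriv (deriv (greenH ρ f u v)) t + q t * greenH ρ f u v t = f t := by
    intro t
    have hW := wronskian_eq_of_linear_ode hu hv huode hvode t
    rw [hu0, hu0', hv0, hv0'] at hW
    rw [(hasDerivAt_deriv_greenH hf hu hv t).deriv, hW, greenH,
      eq_neg_of_add_eq_zero_left (huode t), eq_neg_of_add_eq_zero_left (hvode t)]
    ring
  have hHd : Differentiable ℝ (greenH ρ f u v) := fun t =>
    (hasDerivAt_greenH hf (hu.differentiable two_ne_zero)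
      (hv.differentiable two_ne_zero) t).differentiableAt
  have hHC : ContDiff ℝ 2 (greenH ρ f u v) := by
    have hcont : Continuous (deriv (deriv (greenH ρ f u v))) := by
      rw [funext fun t => eq_sub_of_add_eq (hHode t)]
      exact hf.sub (hq.mul hHd.continuous)
    rw [show (2 : WithTop ℕ∞) = 1 + 1 from one_add_one_eq_two.symm, contDiff_succ_iff_deriv]
    exact ⟨hHd, by simp, contDiff_one_iff_deriv.2
      ⟨fun t => (hasDerivAt_deriv_greenH hf hu hv t).differentiableAt, hcont⟩⟩
  have hHo := greenH_neg ρ hfo hue hvo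
  have hHp := greenH_periodic hρ hf hu.continuous hv.continuous hfo hue hfp hup hρv
  refine ⟨⟨hHC, hHo, hHp, hHode⟩, fun G hG hGo hGp hGode => ?_⟩
  have hDode : ∀ t, deriv (deriv (G - greenH ρ f u v)) t
      + q t * (G - greenH ρ f u v) t = 0 := by
    intro t
    have h1 : deriv (G - greenH ρ f u v) = deriv G - deriv (greenH ρ f u v) :=
      funext fun x => deriv_sub (hG.differentiable two_ne_zero x) (hHd x)
    rw [h1, deriv_sub (hG.differentiable_deriv_two t) (hHC.differentiable_deriv_two t),
      Pi.sub_apply]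
    linear_combination hGode t - hHode t
  have hrep := eq_fundamental_combination (y := G - greenH ρ f u v) hu hv (hG.sub hHC)
    huode hvode hDode hu0 hu0' hv0 hv0'
  have hD0 : (G - greenH ρ f u v) 0 = 0 := by
    have h1 := hGo 0
    have h2 := hHo 0
    rw [neg_zero] at h1 h2
    rw [Pi.sub_apply]
    linarith
  have hslope : deriv (G - greenH ρ f u v) 0 = 0 := by
    have h1 := hrep (0 + 2 * π)
    have h2 := hρv 0
    rw [(hGp.sub hHp) 0, hD0, zero_mul, zero_add, sub_eq_iff_eq_add.1 h2, hu0, hv0] at h1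
    simpa [hρ] using h1.symm
  funext t
  have h := hrep t
  rw [hD0, hslope, Pi.sub_apply] at h
  linarith
end

section
/- Let g : ℝ → ℝ be C², odd, 2π-periodic and satisfy g'' + A(g)(3⟨g²⟩ g + g³) = 0 on ℝ, where A(g) := ⟨g⁴⟩ + 3⟨g²⟩². If H₁ : ℝ → ℝ is C², odd, 2π-periodic and satisfies H₁'' + 3A(g)(⟨g²⟩ + g²)H₁ = g on ℝ, then 2A(g)⟨g³ H₁⟩ = ⟨g²⟩. If H₃ : ℝ → ℝ is C², odd, 2π-periodic and satisfies H₃'' + 3A(g)(⟨g²⟩ + g²)H₃ = g³ on ℝ, then 2A(g)⟨g³ H₃⟩ = ⟨g⁴⟩. -/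
open Real

/-- Green identity on a period: the second derivative is symmetric on periodic `C²` functions. -/
theorem integral_mul_deriv_deriv_sub_of_periodic {u v : ℝ → ℝ} {T : ℝ}
    (hu : ContDiff ℝ 2 u) (hv : ContDiff ℝ 2 v)
    (hut : Function.Periodic u T) (hvt : Function.Periodic v T) :
    ∫ t in (0:ℝ)..T, (u t * deriv (deriv v) t - deriv (deriv u) t * v t) = 0 := by
  have periodic_deriv : ∀ {w : ℝ → ℝ}, Function.Periodic w T → deriv w T = deriv w 0 := by
    intro w hw
    have h := deriv_comp_add_const w T 0
    rw [show (fun x => w (x + T)) = w from funext hw, zero_add] at h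
    exact h.symm
  have hu' : ContDiff ℝ 1 (deriv u) :=
    ContDiff.deriv' (n := 1) (by simpa [one_add_one_eq_two] using hu)
  have hv' : ContDiff ℝ 1 (deriv v) :=
    ContDiff.deriv' (n := 1) (by simpa [one_add_one_eq_two] using hv)
  have hu'' : Continuous (deriv (deriv u)) := hu'.continuous_deriv le_rfl
  have hv'' : Continuous (deriv (deriv v)) := hv'.continuous_deriv le_rfl
  have hderiv : ∀ t, HasDerivAt (fun t => u t * deriv v t - deriv u t * v t)
      (u t * deriv (deriv v) t - deriv (deriv u) t * v t) t := by
    intro t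
    have h := (((hu.differentiable two_ne_zero) t).hasDerivAt.mul
      ((hv'.differentiable one_ne_zero) t).hasDerivAt).sub
      (((hu'.differentiable one_ne_zero) t).hasDerivAt.mul
      ((hv.differentiable two_ne_zero) t).hasDerivAt)
    exact h.congr_deriv (by ring)
  rw [intervalIntegral.integral_eq_sub_of_hasDerivAt (fun t _ => hderiv t)
    (((hu.continuous.mul hv'').sub (hu''.mul hv.continuous)).intervalIntegrable _ _),
    periodic_deriv hut, periodic_deriv hvt, hut.eq, hvt.eq, sub_self]

/-- Testing the linearized equation `H'' + 3 A (m + g²) H = r` against the solution `g` of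
`g'' + A (3 m g + g³) = 0`. -/
theorem avg_cube_mul_of_linearized {g H r : ℝ → ℝ} {A m : ℝ}
    (hg : ContDiff ℝ 2 g) (hper : Function.Periodic g (2 * π))
    (hode : ∀ t, deriv (deriv g) t + A * (3 * m * g t + g t ^ 3) = 0)
    (hH : ContDiff ℝ 2 H) (hHper : Function.Periodic H (2 * π)) (hr : Continuous r)
    (hlin : ∀ t, deriv (deriv H) t + 3 * A * (m + g t ^ 2) * H t = r t) :
    2 * A * avg (fun s => g s ^ 3 * H s) = avg (fun s => g s * r s) := by
  have hgc := hg.continuous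
  have hHc := hH.continuous
  have hgreen := integral_mul_deriv_deriv_sub_of_periodic hg hH hper hHper
  have hintegrand : (fun t => g t * deriv (deriv H) t - deriv (deriv g) t * H t) =
      fun t => g t * r t - 2 * A * (g t ^ 3 * H t) := by
    funext t
    linear_combination g t * hlin t - H t * hode t
  rw [hintegrand, intervalIntegral.integral_sub
    (Continuous.intervalIntegrable (by fun_prop) _ _)
    (Continuous.intervalIntegrable (by fun_prop) _ _),
    intervalIntegral.integral_const_mul] at hgreen
  unfold avg
  linear_combination -(1 / (2 * π)) * hgreen

theorem stmt_4 (g : ℝ → ℝ)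
    (hg : ContDiff ℝ 2 g)
    (hodd : ∀ t : ℝ, g (-t) = -g t)
    (hper : Function.Periodic g (2 * π))
    (A : ℝ) (hA : A = avg (fun s => g s ^ 4) + 3 * avg (fun s => g s ^ 2) ^ 2)
    (hode : ∀ t : ℝ, deriv (deriv g) t
        + A * (3 * avg (fun s => g s ^ 2) * g t + g t ^ 3) = 0) :
    (∀ H₁ : ℝ → ℝ, ContDiff ℝ 2 H₁ → (∀ t : ℝ, H₁ (-t) = -H₁ t) →
      Function.Periodic H₁ (2 * π) →
      (∀ t : ℝ, deriv (deriv H₁) t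
          + 3 * A * (avg (fun s => g s ^ 2) + g t ^ 2) * H₁ t = g t) →
      2 * A * avg (fun s => g s ^ 3 * H₁ s) = avg (fun s => g s ^ 2)) ∧
    (∀ H₃ : ℝ → ℝ, ContDiff ℝ 2 H₃ → (∀ t : ℝ, H₃ (-t) = -H₃ t) →
      Function.Periodic H₃ (2 * π) →
      (∀ t : ℝ, deriv (deriv H₃) t
          + 3 * A * (avg (fun s => g s ^ 2) + g t ^ 2) * H₃ t = g t ^ 3) →
      2 * A * avg (fun s => g s ^ 3 * H₃ s) = avg (fun s => g s ^ 4)) := by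
  refine ⟨fun H₁ hH _ hHper hlin => ?_, fun H₃ hH _ hHper hlin => ?_⟩
  · rw [avg_cube_mul_of_linearized hg hper hode hH hHper hg.continuous hlin]
    simp only [pow_two]
  · rw [avg_cube_mul_of_linearized hg hper hode hH hHper (hg.continuous.pow 3) hlin]
    exact congrArg avg (funext fun s => (pow_succ' (g s) 3).symm)
end

section
/- Let g : ℝ → ℝ be real-analytic, odd, 2π-periodic, not identically zero, and satisfy g'' + A(g)(3⟨g²⟩ g + g³) = 0 on ℝ, where A(g) := ⟨g⁴⟩ + 3⟨g²⟩². Let v̄ be the solution of h'' + 3A(g)(⟨g²⟩ + g²)h = 0 with v̄(0) = 0, v̄'(0) = 1, and let ρ > 0 satisfy v̄(t + 2π) − v̄(t) = ρ g'(t)/g'(0) for all t. If H : ℝ → ℝ is C², odd, 2π-periodic and satisfies H'' + 3A(g)(⟨g²⟩ + g²)H = g on ℝ, then ⟨g H⟩ = ρ/(4π A(g)) + (1/(2πρ))(∫₀^{2π} g(t) v̄(t) dt)², and in particular ⟨g H⟩ > 0. -/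
open Real

/-- The Wronskian of solutions `x` and `y` of the linear second-order equations with common
potential `q` and right-hand sides `a` and `b` has derivative `a y - b x`. -/
theorem hasDerivAt_wronskian {x x' y y' : ℝ → ℝ} {q a b t : ℝ}
    (hx : HasDerivAt x (x' t) t) (hx' : HasDerivAt x' (a - q * x t) t)
    (hy : HasDerivAt y (y' t) t) (hy' : HasDerivAt y' (b - q * y t) t) :
    HasDerivAt (fun s => x' s * y s - x s * y' s) (a * y t - b * x t) t :=
  ((hx'.mul hy).sub (hx.mul hy')).congr_deriv (by ring)

theorem hasDerivAt_deriv_of_contDiff_two {f : ℝ → ℝ} (hf : ContDiff ℝ 2 f) (t : ℝ) :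
    HasDerivAt f (deriv f t) t ∧ HasDerivAt (deriv f) (deriv (deriv f) t) t :=
  ⟨(hf.differentiable (by norm_num)).differentiableAt.hasDerivAt,
    (hf.differentiable_deriv_two).differentiableAt.hasDerivAt⟩

theorem apply_zero_of_odd {f : ℝ → ℝ} (hf : ∀ t, f (-t) = -f t) : f 0 = 0 := by
  have := hf 0
  rw [neg_zero] at this
  linarith

theorem deriv_periodic {f : ℝ → ℝ} {p : ℝ} (hf : Function.Periodic f p) :
    Function.Periodic (deriv f) p := by
  intro t
  rw [← deriv_comp_add_const f p t, funext hf]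

theorem stmt_5 (g : ℝ → ℝ)
    (han : ∀ t : ℝ, AnalyticAt ℝ g t)
    (hodd : ∀ t : ℝ, g (-t) = -g t)
    (hper : Function.Periodic g (2 * π))
    (hne : g ≠ 0)
    (A : ℝ) (hA : A = avg (fun s => g s ^ 4) + 3 * avg (fun s => g s ^ 2) ^ 2)
    (hode : ∀ t : ℝ, deriv (deriv g) t
        + A * (3 * avg (fun s => g s ^ 2) * g t + g t ^ 3) = 0)
    (v : ℝ → ℝ) (hv : ContDiff ℝ 2 v)
    (hvode : ∀ t : ℝ, deriv (deriv v) t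
        + 3 * A * (avg (fun s => g s ^ 2) + g t ^ 2) * v t = 0)
    (hv0 : v 0 = 0) (hv0' : deriv v 0 = 1)
    (ρ : ℝ) (hρ : 0 < ρ)
    (hρv : ∀ t : ℝ, v (t + 2 * π) - v t = ρ * (deriv g t / deriv g 0))
    (H : ℝ → ℝ) (hH : ContDiff ℝ 2 H) (hHodd : ∀ t : ℝ, H (-t) = -H t)
    (hHper : Function.Periodic H (2 * π))
    (hHode : ∀ t : ℝ, deriv (deriv H) t
        + 3 * A * (avg (fun s => g s ^ 2) + g t ^ 2) * H t = g t) :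
    avg (fun s => g s * H s)
        = ρ / (4 * π * A) + (1 / (2 * π * ρ)) * (∫ t in (0:ℝ)..(2 * π), g t * v t) ^ 2 ∧
      0 < avg (fun s => g s * H s) := by
  have hg2 : ContDiff ℝ 2 g := contDiff_iff_contDiffAt.mpr fun t => (han t).contDiffAt
  have hgc : Continuous g := hg2.continuous
  have hm : 0 < avg (fun s => g s ^ 2) := avg_sq_pos hgc hper hne
  have hApos : 0 < A := by
    have h4 : 0 ≤ avg (fun s => g s ^ 4) :=
      mul_nonneg (by positivity)
        (intervalIntegral.integral_nonneg (by positivity) fun t _ => by positivity)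
    rw [hA]
    positivity
  generalize avg (fun s => g s ^ 2) = m at *
  have hg0 : g 0 = 0 := apply_zero_of_odd hodd
  have hH0 : H 0 = 0 := apply_zero_of_odd hHodd
  have hg1 t : HasDerivAt g (deriv g t) t := (hasDerivAt_deriv_of_contDiff_two hg2 t).1
  have hu t : HasDerivAt (deriv g) (2 * A * g t ^ 3 - 3 * A * (m + g t ^ 2) * g t) t :=
    (hasDerivAt_deriv_of_contDiff_two hg2 t).2.congr_deriv (by linear_combination hode t)
  have hu' t : HasDerivAt (fun s => 2 * A * g s ^ 3 - 3 * A * (m + g s ^ 2) * g s)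
      (0 - 3 * A * (m + g t ^ 2) * deriv g t) t :=
    ((((hg1 t).pow 3).const_mul (2 * A)).sub
      (((((hg1 t).pow 2).const_add m).const_mul (3 * A)).mul (hg1 t))).congr_deriv
      (by simp; ring)
  have hv1 t : HasDerivAt v (deriv v t) t := (hasDerivAt_deriv_of_contDiff_two hv t).1
  have hv2 t : HasDerivAt (deriv v) (0 - 3 * A * (m + g t ^ 2) * v t) t :=
    (hasDerivAt_deriv_of_contDiff_two hv t).2.congr_deriv (by linear_combination hvode t)
  have hH1 t : HasDerivAt H (deriv H t) t := (hasDerivAt_deriv_of_contDiff_two hH t).1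
  have hH2 t : HasDerivAt (deriv H) (g t - 3 * A * (m + g t ^ 2) * H t) t :=
    (hasDerivAt_deriv_of_contDiff_two hH t).2.congr_deriv (by linear_combination hHode t)
  have hc : deriv g 0 ≠ 0 := by
    intro hc
    refine hne (funext fun t => ?_)
    have energy := eq_apply_zero_of_hasDerivAt_zero
      (f := fun s => deriv g s ^ 2 + A * (3 * m * g s ^ 2 + g s ^ 4 / 2)) (fun s =>
        (((hu s).pow 2).add (((((hg1 s).pow 2).const_mul (3 * m)).add
          (((hg1 s).pow 4).div_const 2)).const_mul A)).congr_deriv (by simp; ring)) t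
    simp only [hc, hg0] at energy
    by_contra hgt
    have hgt : g t ≠ 0 := hgt
    have : 0 < deriv g t ^ 2 + A * (3 * m * g t ^ 2 + g t ^ 4 / 2) := by positivity
    norm_num at energy
    linarith
  -- The homogeneous solutions `deriv g` and `v` represent `H` by variation of parameters.
  have hW t := eq_apply_zero_of_hasDerivAt_zero (fun s =>
    (hasDerivAt_wronskian (hv1 s) (hv2 s) (hu s) (hu' s)).congr_deriv (by ring)) t
  have hK t := eq_apply_zero_of_hasDerivAt_zero (fun s =>
    ((hasDerivAt_wronskian (hH1 s) (hH2 s) (hu s) (hu' s)).sub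
      (((hg1 s).pow 2).div_const 2)).congr_deriv (by simp; ring)) t
  have hV t : HasDerivAt (fun s => deriv H s * v s - H s * deriv v s) (g t * v t) t :=
    (hasDerivAt_wronskian (hH1 t) (hH2 t) (hv1 t) (hv2 t)).congr_deriv (by ring)
  have hG t : HasDerivAt (fun s => deriv g s * v s - g s * deriv v s) (2 * A * g t ^ 3 * v t) t :=
    (hasDerivAt_wronskian (hg1 t) (hu t) (hv1 t) (hv2 t)).congr_deriv (by ring)
  simp only [Pi.sub_apply, Pi.pow_apply, hg0, hH0, hv0, hv0'] at hW hK
  have hF t : HasDerivAt (fun s => deriv H 0 * deriv g 0 * (deriv H s * v s - H s * deriv v s)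
      + (deriv g s * v s - g s * deriv v s) / (2 * A)
      - g s ^ 2 / 2 * (deriv H s * v s - H s * deriv v s)) (deriv g 0 * (g t * H t)) t := by
    refine ((((hV t).const_mul (deriv H 0 * deriv g 0)).add ((hG t).div_const (2 * A))).sub
      ((((hg1 t).pow 2).div_const 2).mul (hV t))).congr_deriv ?_
    simp only [Pi.pow_apply]
    have : 2 * A * g t ^ 3 * v t / (2 * A) = g t ^ 3 * v t := by field_simp
    rw [this]
    push_cast
    linear_combination g t * H t * hW t - g t * v t * hK t
  have hv2π : v (2 * π) = ρ := by
    have := hρv 0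
    rwa [zero_add, hv0, sub_zero, div_self hc, mul_one] at this
  have hg2π : g (2 * π) = 0 := by rw [hper.eq, hg0]
  have hH2π : H (2 * π) = 0 := by rw [hHper.eq, hH0]
  have hP : ∫ t in (0:ℝ)..(2 * π), g t * v t = deriv H 0 * ρ := by
    rw [intervalIntegral.integral_eq_sub_of_hasDerivAt (fun t _ => hV t)
      ((hgc.mul hv.continuous).intervalIntegrable _ _)]
    simp only [hH2π, hH0, hv0, hv2π, (deriv_periodic hHper).eq]
    ring
  have hI : ∫ t in (0:ℝ)..(2 * π), g t * H t = deriv H 0 ^ 2 * ρ + ρ / (2 * A) := by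
    refine mul_left_cancel₀ hc ?_
    rw [← intervalIntegral.integral_const_mul,
      intervalIntegral.integral_eq_sub_of_hasDerivAt (fun t _ => hF t)
      ((continuous_const.mul (hgc.mul hH.continuous)).intervalIntegrable _ _)]
    simp only [hH2π, hH0, hv0, hv2π, hg0, hg2π, (deriv_periodic hHper).eq,
      (deriv_periodic hper).eq]
    ring
  have havg : avg (fun s => g s * H s)
      = ρ / (4 * π * A)
        + (1 / (2 * π * ρ)) * (∫ t in (0:ℝ)..(2 * π), g t * v t) ^ 2 := by
    rw [avg, hI, hP]
    field_simp
    ring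
  exact ⟨havg, by rw [havg]; positivity⟩
end

section
/- Let g : ℝ → ℝ be real-analytic, odd, 2π-periodic, not identically zero, and satisfy g'' + A(g)(3⟨g²⟩ g + g³) = 0 on ℝ, where A(g) := ⟨g⁴⟩ + 3⟨g²⟩². Let v̄ be the solution of h'' + 3A(g)(⟨g²⟩ + g²)h = 0 with v̄(0) = 0, v̄'(0) = 1, and let ρ > 0 satisfy v̄(t + 2π) − v̄(t) = ρ g'(t)/g'(0) for all t. Then ∫₀^{2π} g(t)³ v̄(t) dt = ρ g'(0)/(2 A(g)). -/
open Real

/-- A nonzero continuous periodic function has positive fourth moment. -/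
theorem avg_pow_four_pos {g : ℝ → ℝ} (hg : Continuous g)
    (hper : Function.Periodic g (2 * π)) (hne : g ≠ 0) :
    0 < avg (fun s => g s ^ 4) := by
  obtain ⟨x, hx⟩ := Function.ne_iff.mp hne
  obtain ⟨y, hy, hxy⟩ := hper.exists_mem_Ico₀ two_pi_pos x
  have hgy : g y ≠ 0 := hxy ▸ hx
  refine mul_pos (by positivity) ?_
  exact intervalIntegral.integral_pos two_pi_pos (hg.pow 4).continuousOn
    (fun t _ => by positivity) ⟨y, Set.Ico_subset_Icc_self hy, by positivity⟩

theorem stmt_6 (g : ℝ → ℝ)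
    (han : ∀ t : ℝ, AnalyticAt ℝ g t)
    (hodd : ∀ t : ℝ, g (-t) = -g t)
    (hper : Function.Periodic g (2 * π))
    (hne : g ≠ 0)
    (A : ℝ) (hA : A = avg (fun s => g s ^ 4) + 3 * avg (fun s => g s ^ 2) ^ 2)
    (hode : ∀ t : ℝ, deriv (deriv g) t
        + A * (3 * avg (fun s => g s ^ 2) * g t + g t ^ 3) = 0)
    (v : ℝ → ℝ) (hv : ContDiff ℝ 2 v)
    (hvode : ∀ t : ℝ, deriv (deriv v) t
        + 3 * A * (avg (fun s => g s ^ 2) + g t ^ 2) * v t = 0)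
    (hv0 : v 0 = 0) (hv0' : deriv v 0 = 1)
    (ρ : ℝ) (hρ : 0 < ρ)
    (hρv : ∀ t : ℝ, v (t + 2 * π) - v t = ρ * (deriv g t / deriv g 0)) :
    ∫ t in (0:ℝ)..(2 * π), g t ^ 3 * v t = ρ * deriv g 0 / (2 * A) := by
  have hg : ContDiff ℝ 2 g := contDiff_iff_contDiffAt.mpr fun t => (han t).contDiffAt
  have hApos : 0 < A := by
    have := avg_pow_four_pos hg.continuous hper hne
    rw [hA]
    positivity
  have hd {f : ℝ → ℝ} (hf : ContDiff ℝ 2 f) (t : ℝ) :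
      HasDerivAt f (deriv f t) t ∧ HasDerivAt (deriv f) (deriv (deriv f) t) t :=
    ⟨(hf.differentiable (by norm_num) t).hasDerivAt,
      ((hf.iterate_deriv' 1 1).differentiable (by norm_num) t).hasDerivAt⟩
  have hW (t : ℝ) : HasDerivAt (fun s => deriv g s * v s - g s * deriv v s)
      (2 * A * (g t ^ 3 * v t)) t := by
    obtain ⟨hg1, hg2⟩ := hd hg t
    obtain ⟨hv1, hv2⟩ := hd hv t
    refine ((hg2.mul hv1).sub (hg1.mul hv2)).congr_deriv ?_
    linear_combination v t * hode t - g t * hvode t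
  have hint : 2 * A * ∫ t in (0:ℝ)..(2 * π), g t ^ 3 * v t
      = deriv g (2 * π) * v (2 * π) - g (2 * π) * deriv v (2 * π)
        - (deriv g 0 * v 0 - g 0 * deriv v 0) := by
    rw [← intervalIntegral.integral_const_mul]
    refine intervalIntegral.integral_eq_sub_of_hasDerivAt (fun t _ => hW t) ?_
    have := hg.continuous
    have := hv.continuous
    exact Continuous.intervalIntegrable (by fun_prop) _ _
  have hg0 : g 0 = 0 := by
    have := hodd 0
    rw [neg_zero] at this
    linarith
  have hgT : g (2 * π) = 0 := hper.eq.trans hg0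
  have hdg : deriv g (2 * π) = deriv g 0 := by
    have := deriv_comp_add_const g (2 * π) 0
    rw [show (fun x => g (x + 2 * π)) = g from funext hper, zero_add] at this
    exact this.symm
  have hvT : v (2 * π) = ρ * (deriv g 0 / deriv g 0) := by
    simpa [hv0] using hρv 0
  rw [hgT, hg0, hdg, hv0, hvT] at hint
  rw [eq_div_iff (by positivity), mul_comm, hint]
  rcases eq_or_ne (deriv g 0) 0 with h | h
  · simp [h]
  · field_simp
    ring
end

section
/- For m ∈ (−1, 0] define ψ(m) := (7 + m)K(m) − 6E(m). Then ψ(m) = ∫₀^{π/2} (1 + m(1 + 6 sin²θ)) (1 − m sin²θ)^{−1/2} dθ, ψ is strictly increasing on (−1, 0), ψ(0) = π/2 > 0, ψ(−1) := −6∫₀^{π/2} sin²θ (1 + sin²θ)^{−1/2} dθ < 0, and ψ has a unique zero m̄ in the interval (−1, 0). -/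
open Real

/-- Complete elliptic integral of the first kind (parameter `m`). -/
noncomputable def Kc (m : ℝ) : ℝ := ∫ θ in (0:ℝ)..(π / 2), 1 / Real.sqrt (1 - m * Real.sin θ ^ 2)

/-- Complete elliptic integral of the second kind (parameter `m`). -/
noncomputable def Ec (m : ℝ) : ℝ := ∫ θ in (0:ℝ)..(π / 2), Real.sqrt (1 - m * Real.sin θ ^ 2)

/-- `ψ(m) = (7 + m)K(m) − 6E(m)`. -/
noncomputable def psi (m : ℝ) : ℝ := (7 + m) * Kc m - 6 * Ec m

theorem one_sub_mul_sin_sq_pos {m : ℝ} (hm : m ≤ 0) (θ : ℝ) : 0 < 1 - m * sin θ ^ 2 := by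
  nlinarith [mul_nonneg (neg_nonneg.mpr hm) (sq_nonneg (sin θ))]

theorem continuous_Kc_integrand {m : ℝ} (hm : m ≤ 0) :
    Continuous fun θ : ℝ => 1 / √(1 - m * sin θ ^ 2) :=
  continuous_const.div (by fun_prop) fun θ => (sqrt_pos.mpr (one_sub_mul_sin_sq_pos hm θ)).ne'

theorem Kc_pos {m : ℝ} (hm : m ≤ 0) : 0 < Kc m :=
  intervalIntegral.intervalIntegral_pos_of_pos_on
    ((continuous_Kc_integrand hm).intervalIntegrable _ _)
    (fun θ _ => one_div_pos.mpr (sqrt_pos.mpr (one_sub_mul_sin_sq_pos hm θ))) (by positivity)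

theorem Kc_monotoneOn : MonotoneOn Kc (Set.Iic 0) := by
  intro a ha b hb hab
  refine intervalIntegral.integral_mono_on (by positivity)
    ((continuous_Kc_integrand ha).intervalIntegrable _ _)
    ((continuous_Kc_integrand hb).intervalIntegrable _ _) fun θ _ => ?_
  exact one_div_le_one_div_of_le (sqrt_pos.mpr (one_sub_mul_sin_sq_pos hb θ))
    (sqrt_le_sqrt (by gcongr))

theorem Ec_antitone : Antitone Ec := by
  intro a b hab
  refine intervalIntegral.integral_mono_on (by positivity)
    (Continuous.intervalIntegrable (by fun_prop) _ _)
    (Continuous.intervalIntegrable (by fun_prop) _ _) fun θ _ => ?_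
  exact sqrt_le_sqrt (by gcongr)

theorem psi_strictMonoOn : StrictMonoOn psi (Set.Icc (-1) 0) := by
  intro a ha b hb hab
  have hK := Kc_monotoneOn ha.2 hb.2 hab.le
  have hE := Ec_antitone hab.le
  have hpos := Kc_pos hb.2
  have h₁ : (7 + a) * Kc a ≤ (7 + a) * Kc b :=
    mul_le_mul_of_nonneg_left hK (by linarith [ha.1])
  have h₂ : (7 + a) * Kc b < (7 + b) * Kc b := mul_lt_mul_of_pos_right (by linarith) hpos
  unfold psi
  linarith

theorem continuous_Ec : Continuous Ec :=
  intervalIntegral.continuous_parametric_intervalIntegral_of_continuous' (by fun_prop) _ _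

theorem continuousOn_Kc : ContinuousOn Kc (Set.Iic 0) := by
  have h : Continuous fun m : ℝ => Kc (min m 0) := by
    refine intervalIntegral.continuous_parametric_intervalIntegral_of_continuous'
      (f := fun m θ : ℝ => 1 / √(1 - min m 0 * sin θ ^ 2)) ?_ _ _
    exact continuous_const.div (by fun_prop) fun p =>
      (sqrt_pos.mpr (one_sub_mul_sin_sq_pos (min_le_right _ _) _)).ne'
  exact h.continuousOn.congr fun m hm => by simp only [min_eq_left (Set.mem_Iic.mp hm)]

theorem continuousOn_psi : ContinuousOn psi (Set.Iic 0) :=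
  ((by fun_prop : Continuous fun m : ℝ => 7 + m).continuousOn.mul continuousOn_Kc).sub
   (continuous_Ec.continuousOn.const_mul 6)

theorem psi_eq_integral {m : ℝ} (hm : m ≤ 0) :
    psi m = ∫ θ in (0:ℝ)..(π / 2), (1 + m * (1 + 6 * sin θ ^ 2)) / √(1 - m * sin θ ^ 2) := by
  unfold psi Kc Ec
  rw [← intervalIntegral.integral_const_mul, ← intervalIntegral.integral_const_mul,
    ← intervalIntegral.integral_sub
      (((continuous_Kc_integrand hm).const_mul _).intervalIntegrable _ _)
      (Continuous.intervalIntegrable (by fun_prop) _ _)]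
  refine intervalIntegral.integral_congr fun θ _ => ?_
  have hpos := one_sub_mul_sin_sq_pos hm θ
  have hsq := sq_sqrt hpos.le
  have hne := (sqrt_pos.mpr hpos).ne'
  rw [eq_div_iff hne, sub_mul, mul_assoc, one_div_mul_cancel hne]
  linear_combination -6 * hsq

theorem psi_zero : psi 0 = π / 2 := by
  rw [psi_eq_integral le_rfl]
  simp

theorem psi_neg_one :
    psi (-1) = -6 * ∫ θ in (0:ℝ)..(π / 2), sin θ ^ 2 / √(1 + sin θ ^ 2) := by
  rw [psi_eq_integral (by norm_num), ← intervalIntegral.integral_const_mul]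
  refine intervalIntegral.integral_congr fun θ _ => ?_
  rw [← mul_div_assoc]
  ring_nf

theorem psi_neg_one_neg : psi (-1) < 0 := by
  have hpos : 0 < ∫ θ in (0:ℝ)..(π / 2), sin θ ^ 2 / √(1 + sin θ ^ 2) := by
    refine intervalIntegral.intervalIntegral_pos_of_pos_on
      (Continuous.intervalIntegrable ?_ _ _) (fun θ hθ => ?_) (by positivity)
    · exact Continuous.div (by fun_prop) (by fun_prop) fun θ => by positivity
    · have := sin_pos_of_pos_of_lt_pi hθ.1 (by linarith [hθ.2, pi_pos])
      positivity
  rw [psi_neg_one]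
  linarith

theorem stmt_7 :
    (∀ m ∈ Set.Ioc (-1 : ℝ) 0,
      psi m = ∫ θ in (0:ℝ)..(π / 2),
        (1 + m * (1 + 6 * Real.sin θ ^ 2)) / Real.sqrt (1 - m * Real.sin θ ^ 2)) ∧
    StrictMonoOn psi (Set.Ioo (-1 : ℝ) 0) ∧
    psi 0 = π / 2 ∧ (0 : ℝ) < π / 2 ∧
    psi (-1) = -6 * ∫ θ in (0:ℝ)..(π / 2), Real.sin θ ^ 2 / Real.sqrt (1 + Real.sin θ ^ 2) ∧
    psi (-1) < 0 ∧
    (∃! m : ℝ, m ∈ Set.Ioo (-1 : ℝ) 0 ∧ psi m = 0) := by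
  have hmono := psi_strictMonoOn.mono Set.Ioo_subset_Icc_self
  refine ⟨fun m hm => psi_eq_integral hm.2, hmono, psi_zero, by positivity, psi_neg_one,
    psi_neg_one_neg, ?_⟩
  obtain ⟨m, hm, hm0⟩ := intermediate_value_Ioo (by norm_num : (-1 : ℝ) ≤ 0)
    (continuousOn_psi.mono Set.Icc_subset_Iic_self)
    ⟨psi_neg_one_neg, by rw [psi_zero]; positivity⟩
  exact ⟨m, ⟨hm, hm0⟩, fun y hy => hmono.injOn hy.1 hm (hy.2.trans hm0.symm)⟩
end

section
/- There exist constants V > 0, Ω > 0 and m ∈ (−1, 0) such that the function g(t) := V·sn(Ωt, m) is odd, 2π-periodic with minimal period 2π, and satisfies for all t ∈ ℝ the equation g''(t) + A(g)(3⟨g²⟩ g(t) + g(t)³) = 0, where A(g) := ⟨g⁴⟩ + 3⟨g²⟩². -/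
open Real

/-- Incomplete elliptic integral of the first kind `F(φ, m)`. -/
noncomputable def Fm (m φ : ℝ) : ℝ := ∫ θ in (0:ℝ)..φ, 1 / Real.sqrt (1 - m * Real.sin θ ^ 2)

/-- The Jacobi elliptic sine `sn(t, m) = sin(F_m⁻¹(t))`. -/
noncomputable def sn (t m : ℝ) : ℝ := Real.sin (Function.invFun (Fm m) t)

section EllipticSine

variable {m : ℝ}

lemma one_le_one_sub_mul_sin_sq (hm : m ≤ 0) (θ : ℝ) : 1 ≤ 1 - m * sin θ ^ 2 := by
  nlinarith [mul_nonneg (neg_nonneg.mpr hm) (sq_nonneg (sin θ))]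

lemma sqrt_one_sub_mul_sin_sq_pos (hm : m ≤ 0) (θ : ℝ) : 0 < √(1 - m * sin θ ^ 2) :=
  Real.sqrt_pos.mpr (one_pos.trans_le (one_le_one_sub_mul_sin_sq hm θ))

lemma continuous_one_div_sqrt (hm : m ≤ 0) :
    Continuous fun θ : ℝ => 1 / √(1 - m * sin θ ^ 2) :=
  Continuous.div (by fun_prop) (by fun_prop) fun θ => (sqrt_one_sub_mul_sin_sq_pos hm θ).ne'

lemma periodic_one_div_sqrt (m : ℝ) :
    Function.Periodic (fun θ : ℝ => 1 / √(1 - m * sin θ ^ 2)) (2 * π) := fun θ => by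
  simp only [sin_add_two_pi]

lemma Fm_zero (m : ℝ) : Fm m 0 = 0 := by simp [Fm]

lemma hasDerivAt_Fm (hm : m ≤ 0) (φ : ℝ) :
    HasDerivAt (Fm m) (1 / √(1 - m * sin φ ^ 2)) φ :=
  (continuous_one_div_sqrt hm).integral_hasStrictDerivAt 0 φ |>.hasDerivAt

lemma continuous_Fm (hm : m ≤ 0) : Continuous (Fm m) :=
  continuous_iff_continuousAt.mpr fun φ => (hasDerivAt_Fm hm φ).continuousAt

lemma strictMono_Fm (hm : m ≤ 0) : StrictMono (Fm m) :=
  strictMono_of_deriv_pos fun φ => by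
    rw [(hasDerivAt_Fm hm φ).deriv]
    exact one_div_pos.mpr (sqrt_one_sub_mul_sin_sq_pos hm φ)

lemma Fm_two_pi_pos (hm : m ≤ 0) : 0 < Fm m (2 * π) := by
  simpa [Fm_zero] using strictMono_Fm hm two_pi_pos

lemma surjective_Fm (hm : m ≤ 0) : Function.Surjective (Fm m) :=
  (continuous_Fm hm).surjective
    ((periodic_one_div_sqrt m).tendsto_atTop_intervalIntegral_of_pos
      (Fm_two_pi_pos hm) two_pi_pos)
    ((periodic_one_div_sqrt m).tendsto_atBot_intervalIntegral_of_pos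
      (Fm_two_pi_pos hm) two_pi_pos)

lemma Fm_neg (m φ : ℝ) : Fm m (-φ) = -Fm m φ := by
  have h := intervalIntegral.integral_comp_neg (a := 0) (b := φ)
    (fun θ : ℝ => 1 / √(1 - m * sin θ ^ 2))
  simp only [sin_neg, neg_sq, neg_zero] at h
  rw [Fm, Fm, intervalIntegral.integral_symm, h]

lemma Fm_add_two_pi (hm : m ≤ 0) (φ : ℝ) : Fm m (φ + 2 * π) = Fm m φ + Fm m (2 * π) := by
  have hint (a b : ℝ) :=
    (continuous_one_div_sqrt hm).intervalIntegrable (μ := MeasureTheory.volume) a b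
  have h := (periodic_one_div_sqrt m).intervalIntegral_add_eq φ 0
  rw [zero_add] at h
  rw [Fm, Fm, Fm, ← h, intervalIntegral.integral_add_adjacent_intervals (hint _ _) (hint _ _)]

/-- The Jacobi amplitude, the inverse of `Fm m`. -/
noncomputable def am (m t : ℝ) : ℝ := Function.invFun (Fm m) t

lemma Fm_am (hm : m ≤ 0) (t : ℝ) : Fm m (am m t) = t :=
  Function.rightInverse_invFun (surjective_Fm hm) t

lemma am_Fm (hm : m ≤ 0) (φ : ℝ) : am m (Fm m φ) = φ :=
  Function.leftInverse_invFun (strictMono_Fm hm).injective φ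

lemma am_zero (hm : m ≤ 0) : am m 0 = 0 := by
  simpa [Fm_zero] using am_Fm hm 0

lemma am_neg (hm : m ≤ 0) (t : ℝ) : am m (-t) = -am m t := by
  rw [← am_Fm hm (-am m t), Fm_neg, Fm_am hm]

lemma am_add_Fm_two_pi (hm : m ≤ 0) (t : ℝ) : am m (t + Fm m (2 * π)) = am m t + 2 * π := by
  rw [← am_Fm hm (am m t + 2 * π), Fm_add_two_pi hm, Fm_am hm]

lemma strictMono_am (hm : m ≤ 0) : StrictMono (am m) := fun s t hst => by
  rwa [← (strictMono_Fm hm).lt_iff_lt, Fm_am hm, Fm_am hm]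

lemma continuous_am (hm : m ≤ 0) : Continuous (am m) :=
  (strictMono_am hm).monotone.continuous_of_surjective fun φ => ⟨Fm m φ, am_Fm hm φ⟩

lemma hasDerivAt_am (hm : m ≤ 0) (t : ℝ) :
    HasDerivAt (am m) (√(1 - m * sin (am m t) ^ 2)) t := by
  have h := (hasDerivAt_Fm hm (am m t)).of_local_left_inverse (continuous_am hm).continuousAt
    (one_div_pos.mpr (sqrt_one_sub_mul_sin_sq_pos hm _)).ne'
    (Filter.Eventually.of_forall (Fm_am hm))
  simpa using h

lemma sn_eq (t m : ℝ) : sn t m = sin (am m t) := rfl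

lemma continuous_sn (hm : m ≤ 0) : Continuous fun t => sn t m :=
  continuous_sin.comp (continuous_am hm)

lemma sn_neg (hm : m ≤ 0) (t : ℝ) : sn (-t) m = -sn t m := by
  rw [sn_eq, sn_eq, am_neg hm, sin_neg]

lemma sn_add_Fm_two_pi (hm : m ≤ 0) (t : ℝ) : sn (t + Fm m (2 * π)) m = sn t m := by
  rw [sn_eq, sn_eq, am_add_Fm_two_pi hm, sin_add_two_pi]

lemma hasDerivAt_sn (hm : m ≤ 0) (t : ℝ) :
    HasDerivAt (fun t => sn t m) (cos (am m t) * √(1 - m * sin (am m t) ^ 2)) t :=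
  (hasDerivAt_am hm t).sin

lemma hasDerivAt_deriv_sn (hm : m ≤ 0) (t : ℝ) :
    HasDerivAt (fun t => cos (am m t) * √(1 - m * sin (am m t) ^ 2))
      (-(1 + m) * sn t m + 2 * m * sn t m ^ 3) t := by
  have hpos := sqrt_one_sub_mul_sin_sq_pos hm (am m t)
  have hone := one_le_one_sub_mul_sin_sq hm (am m t)
  have ha := hasDerivAt_am hm t
  have hd := (((ha.sin.pow 2).const_mul m).const_sub 1).sqrt (by simp; linarith)
  refine (ha.cos.mul hd).congr_deriv ?_
  have hsq := Real.sq_sqrt (zero_le_one.trans hone)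
  have hcos := Real.cos_sq' (am m t)
  simp only [sn_eq, Pi.pow_apply]
  set d := √(1 - m * sin (am m t) ^ 2)
  field_simp
  linear_combination (-2 * sin (am m t)) * hsq - (2 * m * sin (am m t)) * hcos

lemma Fm_two_pi_le_of_periodic_sn (hm : m ≤ 0) {q : ℝ} (hq : 0 < q)
    (h : Function.Periodic (fun t => sn t m) q) : Fm m (2 * π) ≤ q := by
  have hsin : sin (am m q) = 0 := by
    simpa [sn_eq, am_zero hm] using h 0
  have hcos : cos (am m q) = 1 := by
    have h₁ := (hasDerivAt_sn hm (0 + q)).comp_add_const 0 q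
    rw [funext h] at h₁
    simpa [am_zero hm, hsin] using h₁.unique (hasDerivAt_sn hm 0)
  have hpos : 0 < am m q := by simpa [am_zero hm] using strictMono_am hm hq
  obtain ⟨n, hn⟩ := (Real.cos_eq_one_iff _).mp hcos
  have hn₁ : (1 : ℝ) ≤ n := by
    have : (0 : ℝ) < n := by
      by_contra! hle
      nlinarith [two_pi_pos]
    exact_mod_cast this
  calc Fm m (2 * π) ≤ Fm m (am m q) := (strictMono_Fm hm).monotone (by nlinarith [two_pi_pos])
    _ = q := Fm_am hm q

/-- The mean of `sn ^ k` over a period, in the form of a quotient of integrals in the angle. -/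
lemma avg_sn_pow (hm : m ≤ 0) (V : ℝ) (k : ℕ) :
    avg (fun s => (V * sn (Fm m (2 * π) / (2 * π) * s) m) ^ k) =
      V ^ k * ((∫ φ in (0 : ℝ)..2 * π, sin φ ^ k * (1 / √(1 - m * sin φ ^ 2))) / Fm m (2 * π)) := by
  have hK := (Fm_two_pi_pos hm).ne'
  have hpi := two_pi_pos.ne'
  have hsub := intervalIntegral.integral_comp_mul_deriv (a := 0) (b := 2 * π)
    (g := fun t => sn t m ^ k) (fun φ _ => hasDerivAt_Fm hm φ)
    (continuous_one_div_sqrt hm).continuousOn ((continuous_sn hm).pow k)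
  simp only [Function.comp_def, sn_eq, am_Fm hm, Fm_zero] at hsub
  have hscale := intervalIntegral.integral_comp_mul_left (a := 0) (b := 2 * π)
    (fun t => sin (am m t) ^ k) (div_ne_zero hK hpi)
  rw [mul_zero, div_mul_cancel₀ _ hpi, ← hsub, smul_eq_mul] at hscale
  simp only [avg, mul_pow, sn_eq, intervalIntegral.integral_const_mul, hscale]
  field_simp

lemma continuousOn_integral_sin_pow (k : ℕ) :
    ContinuousOn (fun m : ℝ => ∫ φ in (0 : ℝ)..2 * π, sin φ ^ k * (1 / √(1 - m * sin φ ^ 2)))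
      (Set.Iic 0) := by
  have h : Continuous fun m : ℝ =>
      ∫ φ in (0 : ℝ)..2 * π, sin φ ^ k * (1 / √(1 - min m 0 * sin φ ^ 2)) := by
    refine intervalIntegral.continuous_parametric_intervalIntegral_of_continuous' ?_ 0 (2 * π)
    refine Continuous.mul (by fun_prop) (Continuous.div (by fun_prop) (by fun_prop) fun p => ?_)
    exact (sqrt_one_sub_mul_sin_sq_pos (min_le_right p.1 0) p.2).ne'
  exact h.continuousOn.congr fun m hm => by simp only [min_eq_left (Set.mem_Iic.mp hm)]

lemma integral_sin_sq_div_sqrt_pos (hm : m ≤ 0) :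
    0 < ∫ φ in (0 : ℝ)..2 * π, sin φ ^ 2 * (1 / √(1 - m * sin φ ^ 2)) := by
  have hinv φ := one_div_pos.mpr (sqrt_one_sub_mul_sin_sq_pos hm φ)
  refine intervalIntegral.integral_pos two_pi_pos
    (Continuous.mul (by fun_prop) (continuous_one_div_sqrt hm)).continuousOn
    (fun φ _ => mul_nonneg (sq_nonneg _) (hinv φ).le)
    ⟨π / 2, ⟨by positivity, by linarith [pi_pos]⟩, mul_pos (by simp) (hinv _)⟩

lemma exists_parameter :
    ∃ m ∈ Set.Ioo (-1 : ℝ) 0, (1 + m) * Fm m (2 * π) +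
      6 * m * (∫ φ in (0 : ℝ)..2 * π, sin φ ^ 2 * (1 / √(1 - m * sin φ ^ 2))) = 0 := by
  have hF : ContinuousOn (fun m => Fm m (2 * π)) (Set.Iic 0) := by
    simpa [Fm] using continuousOn_integral_sin_pow 0
  have hcont := ((by fun_prop : ContinuousOn (fun m : ℝ => 1 + m) (Set.Iic 0)).mul hF).add
    ((by fun_prop : ContinuousOn (fun m : ℝ => 6 * m) (Set.Iic 0)).mul
      (continuousOn_integral_sin_pow 2))
  refine intermediate_value_Ioo (by norm_num) (hcont.mono fun x hx => hx.2) ⟨?_, ?_⟩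
  · have := integral_sin_sq_div_sqrt_pos (m := -1) (by norm_num)
    simp only [Pi.add_apply, Pi.mul_apply]
    linarith
  · have := Fm_two_pi_pos le_rfl
    simp only [Pi.add_apply, Pi.mul_apply]
    linarith

end EllipticSine

theorem stmt_10 :
    ∃ V Ω m : ℝ, 0 < V ∧ 0 < Ω ∧ m ∈ Set.Ioo (-1 : ℝ) 0 ∧
      (∀ t : ℝ, (fun t => V * sn (Ω * t) m) (-t) = -(fun t => V * sn (Ω * t) m) t) ∧
      Function.Periodic (fun t => V * sn (Ω * t) m) (2 * π) ∧
      (∀ p : ℝ, 0 < p → Function.Periodic (fun t => V * sn (Ω * t) m) p → 2 * π ≤ p) ∧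
      (∀ t : ℝ, deriv (deriv (fun t => V * sn (Ω * t) m)) t
          + (avg (fun s => (V * sn (Ω * s) m) ^ 4)
              + 3 * avg (fun s => (V * sn (Ω * s) m) ^ 2) ^ 2)
            * (3 * avg (fun s => (V * sn (Ω * s) m) ^ 2) * (V * sn (Ω * t) m)
              + (V * sn (Ω * t) m) ^ 3) = 0) := by
  obtain ⟨m, hmem, hroot⟩ := exists_parameter
  have hm : m ≤ 0 := hmem.2.le
  have hK := Fm_two_pi_pos hm
  have hpi := two_pi_pos
  obtain ⟨Ω, hΩ⟩ : ∃ Ω, Ω = Fm m (2 * π) / (2 * π) := ⟨_, rfl⟩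
  have hΩpos : 0 < Ω := hΩ ▸ div_pos hK hpi
  have hΩpi : Ω * (2 * π) = Fm m (2 * π) := by rw [hΩ, div_mul_cancel₀ _ hpi.ne']
  have havg := fun V k => hΩ ▸ avg_sn_pow hm V k
  obtain ⟨S₂, hS₂⟩ : ∃ S, S = (∫ φ in (0 : ℝ)..2 * π,
    sin φ ^ 2 * (1 / √(1 - m * sin φ ^ 2))) / Fm m (2 * π) := ⟨_, rfl⟩
  obtain ⟨S₄, hS₄⟩ : ∃ S, S = (∫ φ in (0 : ℝ)..2 * π,
    sin φ ^ 4 * (1 / √(1 - m * sin φ ^ 2))) / Fm m (2 * π) := ⟨_, rfl⟩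
  have hS₂pos : 0 < S₂ := hS₂ ▸ div_pos (integral_sin_sq_div_sqrt_pos hm) hK
  have hS₄nonneg : 0 ≤ S₄ := by
    rw [hS₄]
    refine div_nonneg (intervalIntegral.integral_nonneg hpi.le fun φ _ => ?_) hK.le
    positivity
  have hbalance : 1 + m + 6 * m * S₂ = 0 := by
    rw [← div_mul_cancel₀ (∫ φ in (0 : ℝ)..2 * π, _) hK.ne', ← hS₂] at hroot
    exact mul_right_cancel₀ hK.ne' (by linear_combination hroot)
  have hD : 0 < S₄ + 3 * S₂ ^ 2 := by positivity
  have hcpos : 0 < -2 * m * Ω ^ 2 / (S₄ + 3 * S₂ ^ 2) :=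
    div_pos (mul_pos (by linarith [hmem.2]) (by positivity)) hD
  obtain ⟨V, hV, hV6⟩ : ∃ V : ℝ, 0 < V ∧ V ^ 6 = -2 * m * Ω ^ 2 / (S₄ + 3 * S₂ ^ 2) :=
    ⟨_, Real.rpow_pos_of_pos hcpos ((6 : ℕ) : ℝ)⁻¹,
      Real.rpow_inv_natCast_pow hcpos.le (by norm_num)⟩
  rw [eq_div_iff hD.ne'] at hV6
  refine ⟨V, Ω, m, hV, hΩpos, hmem, fun t => ?_, fun t => ?_, fun p hp hper => ?_, fun t => ?_⟩
  · simp only [mul_neg, sn_neg hm]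
  · simp only [mul_add, hΩpi, sn_add_Fm_two_pi hm]
  · refine le_of_mul_le_mul_left (hΩpi.trans_le ?_) hΩpos
    refine Fm_two_pi_le_of_periodic_sn hm (mul_pos hΩpos hp) fun t => ?_
    have h := mul_left_cancel₀ hV.ne' (hper (t / Ω))
    rwa [mul_add, mul_div_cancel₀ _ hΩpos.ne'] at h
  · have hlin (t : ℝ) : HasDerivAt (fun t => Ω * t) Ω t := by
      simpa using (hasDerivAt_id t).const_mul Ω
    have h₁ (t : ℝ) := ((hasDerivAt_sn hm (Ω * t)).comp t (hlin t)).const_mul V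
    have h₂ := (((hasDerivAt_deriv_sn hm (Ω * t)).comp t (hlin t)).mul_const Ω).const_mul V
    have hderiv : deriv (fun t => V * sn (Ω * t) m) = _ := funext fun t => (h₁ t).deriv
    have hderiv₂ : deriv (deriv fun t => V * sn (Ω * t) m) t = _ := hderiv ▸ h₂.deriv
    rw [hderiv₂, havg, havg, ← hS₂, ← hS₄]
    linear_combination (3 * S₂ * V * sn (Ω * t) m + V * sn (Ω * t) m ^ 3) * hV6
      - (V * Ω ^ 2 * sn (Ω * t) m) * hbalance
end
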